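/- arXiv:1206.3787 — 2 statements merged into one kernel-verified Lean document; each statement's English description precedes it below -/
import Mathlib

section
/- Fix a₊, a₋ > 0 and set α = 2π/(a₊a₋). Define recursively, for x, y ∈ ℝ^N: J₁(x,y) = exp(iαxy), and for N ≥ 2, J_N(x,y) = (exp(iα y_N (x₁+⋯+x_N))/(N−1)!) · ∫_{ℝ^{N−1}} ∏_{1≤j<k≤N−1} 4 sinh²(π(z_j−z_k)/a₋) · ∏_{j=1}^{N} ∏_{k=1}^{N−1} (1/(2 cosh(π(x_j−z_k)/a₋))) · J_{N−1}(z,(y₁−y_N,…,y_{N−1}−y_N)) dz. Then for every N ≥ 1 all these integrals converge absolutely, and for all x, y ∈ ℝ^N with x_j ≠ x_k and y_j ≠ y_k for all 1 ≤ j < k ≤ N one has J_N(x,y) = ∏_{1≤j<k≤N} ( −i a₋ / (4 sinh(π(x_j−x_k)/a₋) sinh(π(y_j−y_k)/a₊)) ) · Σ_{σ∈S_N} sgn(σ) · exp(iα Σ_{j=1}^{N} x_j y_{σ(j)}). -/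
open MeasureTheory Complex

/-- `α = 2π/(a₊a₋)`. -/
noncomputable def alphaPar (ap am : ℝ) : ℝ := 2 * Real.pi / (ap * am)

/-- The recursively defined joint eigenfunctions `J_N` in the free case `b = a₊`:
`J₁(x,y) = exp(iαxy)` and, for `N ≥ 2`,
`J_N(x,y) = (exp(iα y_N(x₁+⋯+x_N))/(N−1)!) ∫_{ℝ^{N−1}} ∏_{j<k} 4 sinh²(π(z_j−z_k)/a₋)
  ∏_{j,k} (2 cosh(π(x_j−z_k)/a₋))⁻¹ J_{N−1}(z,(y₁−y_N,…,y_{N−1}−y_N)) dz`. -/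
noncomputable def Jfree (ap am : ℝ) : (N : ℕ) → (Fin N → ℝ) → (Fin N → ℝ) → ℂ
  | 0, _, _ => 1
  | 1, x, y => Complex.exp (Complex.I * (alphaPar ap am : ℂ) * (x 0 : ℂ) * (y 0 : ℂ))
  | (N + 2), x, y =>
      (Complex.exp (Complex.I * (alphaPar ap am : ℂ) * (y (Fin.last (N + 1)) : ℂ) *
          ∑ j : Fin (N + 2), (x j : ℂ)) / (Nat.factorial (N + 1) : ℂ)) *
        ∫ z : Fin (N + 1) → ℝ,
          (∏ q ∈ Finset.univ.filter (fun q : Fin (N + 1) × Fin (N + 1) => q.1 < q.2),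
            ((4 * Real.sinh (Real.pi * (z q.1 - z q.2) / am) ^ 2 : ℝ) : ℂ)) *
          (∏ j : Fin (N + 2), ∏ k : Fin (N + 1),
            ((1 / (2 * Real.cosh (Real.pi * (x j - z k) / am)) : ℝ) : ℂ)) *
          Jfree ap am (N + 1) z
            (fun j => y (Fin.castSucc j) - y (Fin.last (N + 1)))

lemma integrable_exp_neg_abs' {s : ℝ} (hs : 0 < s) :
    Integrable (fun z : ℝ => Real.exp (-(s * |z|))) := by
  rw [← integrableOn_univ, ← Set.Iic_union_Ioi (a := (0 : ℝ))]
  refine IntegrableOn.union ?_ ?_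
  · refine (integrableOn_exp_mul_Iic hs 0).congr_fun ?_ measurableSet_Iic
    intro z hz
    simp only [Set.mem_Iic] at hz
    simp [abs_of_nonpos hz]
  · refine (integrableOn_exp_mul_Ioi (neg_lt_zero.mpr hs) 0).congr_fun ?_ measurableSet_Ioi
    intro z hz
    simp only [Set.mem_Ioi] at hz
    simp [abs_of_pos hz]

lemma exp_abs_le_two_cosh (t : ℝ) : Real.exp |t| ≤ 2 * Real.cosh t := by
  rw [← Real.cosh_abs, Real.cosh_eq]
  have := Real.exp_pos (-|t|)
  linarith

lemma inv_cosh_le (t : ℝ) : 1 / Real.cosh t ≤ 2 * Real.exp (-|t|) := by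
  have h := exp_abs_le_two_cosh t
  have h1 := Real.cosh_pos t
  rw [div_le_iff₀ h1, Real.exp_neg]
  have := Real.exp_pos |t|
  rw [show 2 * (Real.exp |t|)⁻¹ * Real.cosh t = (2 * Real.cosh t) / Real.exp |t| by ring]
  rwa [le_div_iff₀ this, one_mul]

lemma abs_sinh_le (t : ℝ) : |Real.sinh t| ≤ Real.exp |t| := by
  rw [Real.abs_sinh, Real.sinh_eq]
  have := Real.exp_pos (-|t|)
  have := Real.exp_pos (|t|)
  linarith

lemma tanh_sub_tanh (u v : ℝ) :
    Real.tanh u - Real.tanh v = Real.sinh (u - v) / (Real.cosh u * Real.cosh v) := by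
  have h1 := (Real.cosh_pos u).ne'
  have h2 := (Real.cosh_pos v).ne'
  rw [Real.tanh_eq_sinh_div_cosh, Real.tanh_eq_sinh_div_cosh, Real.sinh_sub]
  field_simp

lemma tanh_bound0 {s : ℝ} (hs : 0 ≤ s) (hs2 : s ≤ 2) (x z : ℝ) :
    |Real.tanh (x - z) - Real.tanh (-z)| ≤ 4 * Real.exp (s * (|x| - |z|)) := by
  rcases le_total |z| |x| with h | h
  · have h1 := Real.abs_tanh_lt_one (x - z)
    have h2 := Real.abs_tanh_lt_one (-z)
    have h3 := abs_sub (Real.tanh (x - z)) (Real.tanh (-z))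
    have h4 : 1 ≤ Real.exp (s * (|x| - |z|)) :=
      Real.one_le_exp (mul_nonneg hs (by linarith))
    linarith
  · rw [tanh_sub_tanh]
    have e1 : x - z - -z = x := by ring
    rw [e1, abs_div, abs_of_pos (mul_pos (Real.cosh_pos _) (Real.cosh_pos _))]
    calc |Real.sinh x| / (Real.cosh (x - z) * Real.cosh (-z))
        = |Real.sinh x| * ((1 / Real.cosh (x - z)) * (1 / Real.cosh (-z))) := by
          field_simp
      _ ≤ Real.exp |x| * ((2 * Real.exp (-|x - z|)) * (2 * Real.exp (-|-z|))) := by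
          gcongr
          · exact abs_sinh_le x
          · exact inv_cosh_le _
          · exact inv_cosh_le _
      _ = 4 * Real.exp (|x| + -|x - z| + -|-z|) := by
          rw [Real.exp_add, Real.exp_add]; ring
      _ ≤ 4 * Real.exp (s * (|x| - |z|)) := by
          gcongr
          rw [abs_neg]
          have := abs_sub_abs_le_abs_sub z x
          rw [abs_sub_comm] at this
          nlinarith

lemma tanh_bound {s : ℝ} (hs : 0 ≤ s) (hs2 : s ≤ 2) (x x' z : ℝ) :
    |Real.tanh (x - z) - Real.tanh (x' - z)| ≤ 8 * Real.exp (s * (|x| + |x'| - |z|)) := by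
  have h1 := tanh_bound0 hs hs2 x z
  have h2 := tanh_bound0 hs hs2 x' z
  have h3 : Real.exp (s * (|x| - |z|)) ≤ Real.exp (s * (|x| + |x'| - |z|)) := by
    gcongr; linarith [abs_nonneg x']
  have h4 : Real.exp (s * (|x'| - |z|)) ≤ Real.exp (s * (|x| + |x'| - |z|)) := by
    gcongr; linarith [abs_nonneg x]
  have h5 := abs_sub (Real.tanh (x - z) - Real.tanh (-z)) (Real.tanh (x' - z) - Real.tanh (-z))
  rw [show Real.tanh (x - z) - Real.tanh (-z) - (Real.tanh (x' - z) - Real.tanh (-z))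
    = Real.tanh (x - z) - Real.tanh (x' - z) by ring] at h5
  linarith

lemma hasDerivAt_tanh' (t : ℝ) : HasDerivAt Real.tanh (1 / Real.cosh t ^ 2) t := by
  have h := (Real.hasDerivAt_sinh t).div (Real.hasDerivAt_cosh t) (Real.cosh_pos t).ne'
  have e : Real.tanh = Real.sinh / Real.cosh := by
    funext u; simp [Real.tanh_eq_sinh_div_cosh]
  rw [e]
  refine h.congr_deriv ?_
  have := Real.cosh_sq t
  congr 1
  nlinarith

lemma continuous_tanh' : Continuous Real.tanh :=
  continuous_iff_continuousAt.mpr fun t => (hasDerivAt_tanh' t).continuousAt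

lemma integrable_tanh_sub (x x' : ℝ) :
    Integrable (fun z : ℝ => Real.tanh (x - z) - Real.tanh (x' - z)) := by
  have h := ((integrable_exp_neg_abs' (s := 1) one_pos).const_mul (8 * Real.exp (|x| + |x'|)))
  refine h.mono' ?_ ?_
  · have := continuous_tanh'
    exact Continuous.aestronglyMeasurable (by fun_prop)
  · refine Filter.Eventually.of_forall fun z => ?_
    have := tanh_bound (s := 1) (by norm_num) (by norm_num) x x' z
    rw [Real.norm_eq_abs]
    refine this.trans (le_of_eq ?_)
    rw [mul_assoc, ← Real.exp_add]
    ring_nf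

lemma integrable_sech_sq : Integrable (fun z : ℝ => 1 / Real.cosh z ^ 2) := by
  have h := ((integrable_exp_neg_abs' (s := 2) two_pos).const_mul 4)
  refine h.mono' ?_ ?_
  · have : Continuous (fun z : ℝ => 1 / Real.cosh z ^ 2) := by
      refine continuous_const.div (Real.continuous_cosh.pow 2) fun z => ?_
      exact pow_ne_zero _ (Real.cosh_pos z).ne'
    exact this.aestronglyMeasurable
  · refine Filter.Eventually.of_forall fun z => ?_
    have h0 := (one_div_pos.mpr (Real.cosh_pos z)).le
    have := pow_le_pow_left₀ h0 (inv_cosh_le z) 2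
    rw [Real.norm_eq_abs, abs_of_nonneg (by positivity)]
    calc _ = (1 / Real.cosh z) ^ 2 := by ring
      _ ≤ _ := this
      _ = 4 * (Real.exp (-|z|) * Real.exp (-|z|)) := by ring
      _ = _ := by rw [← Real.exp_add]; ring_nf

lemma ft_sech {k : ℝ} (hk : k ≠ 0) :
    ∫ w : ℝ, ((1 / Real.cosh w ^ 2 : ℝ) : ℂ) * cexp (I * k * w) =
      Real.pi * k / Real.sinh (Real.pi * k / 2) := by
  have hd : ∀ w ∈ (Set.univ : Set ℝ), HasDerivWithinAt (fun w : ℝ => Real.sigmoid (2 * w))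
      (1 / (2 * Real.cosh w ^ 2)) Set.univ w := by
    intro w _
    rw [hasDerivWithinAt_univ]
    have h := (Real.hasDerivAt_sigmoid (2 * w)).comp w ((hasDerivAt_id w).const_mul 2)
    refine h.congr_deriv ?_
    rw [← Real.sigmoid_neg, Real.sigmoid_def, Real.sigmoid_def, Real.cosh_eq]
    have e1 : Real.exp (-(2 * w)) = Real.exp (-w) ^ 2 := by
      rw [← Real.exp_nat_mul]; congr 1; push_cast; ring
    have e2 : Real.exp (-(-(2 * w))) = Real.exp w ^ 2 := by
      rw [← Real.exp_nat_mul]; congr 1; push_cast; ring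
    rw [e1, e2, Real.exp_neg]
    have := Real.exp_pos w
    field_simp
    ring
  have hinj : Set.InjOn (fun w : ℝ => Real.sigmoid (2 * w)) Set.univ := by
    intro a _ b _ h
    have := Real.sigmoid_injective h
    linarith
  have himg : (fun w : ℝ => Real.sigmoid (2 * w)) '' Set.univ = Set.Ioo 0 1 := by
    rw [← Real.range_sigmoid, Set.image_univ]
    ext t
    constructor
    · rintro ⟨w, rfl⟩; exact ⟨_, rfl⟩
    · rintro ⟨w, rfl⟩; exact ⟨w / 2, by simp only []; congr 1; ring⟩
  have hcv := integral_image_eq_integral_abs_deriv_smul MeasurableSet.univ hd hinj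
    (fun t : ℝ => (t : ℂ) ^ ((1 + I * k / 2 : ℂ) - 1) * (1 - (t : ℂ)) ^ ((1 - I * k / 2 : ℂ) - 1))
  rw [himg, ← integral_Ioc_eq_integral_Ioo, ← intervalIntegral.integral_of_le zero_le_one] at hcv
  change betaIntegral _ _ = _ at hcv
  have hG := Gamma_mul_Gamma_eq_betaIntegral (s := 1 + I * k / 2) (t := 1 - I * k / 2)
    (by simp) (by simp)
  rw [hcv, setIntegral_univ] at hG
  have hpt : ∀ w : ℝ, |1 / (2 * Real.cosh w ^ 2)| • (((Real.sigmoid (2 * w) : ℝ) : ℂ) ^ ((1 + I * k / 2 : ℂ) - 1) *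
      (1 - ((Real.sigmoid (2 * w) : ℝ) : ℂ)) ^ ((1 - I * k / 2 : ℂ) - 1))
      = (1 / 2 : ℂ) * (((1 / Real.cosh w ^ 2 : ℝ) : ℂ) * cexp (I * k * w)) := by
    intro w
    have hp := Real.sigmoid_pos (2 * w)
    have hq := Real.sigmoid_pos (-(2 * w))
    have hc := Real.cosh_pos w
    rw [abs_of_pos (by positivity)]
    have e1 : (1 - ((Real.sigmoid (2 * w) : ℝ) : ℂ)) = ((Real.sigmoid (-(2 * w)) : ℝ) : ℂ) := by
      rw [Real.sigmoid_neg]; push_cast; ring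
    rw [e1, cpow_def_of_ne_zero (by exact_mod_cast hp.ne'),
      cpow_def_of_ne_zero (by exact_mod_cast hq.ne'), ← Complex.exp_add,
      ← Complex.ofReal_log hp.le, ← Complex.ofReal_log hq.le]
    have e2 : Real.log (Real.sigmoid (-(2 * w))) = Real.log (Real.sigmoid (2 * w)) - 2 * w := by
      rw [← Real.sigmoid_mul_rexp_neg, Real.log_mul hp.ne' (Real.exp_pos _).ne', Real.log_exp]
      ring
    rw [e2, Complex.real_smul]
    have e3 : (((Real.log (Real.sigmoid (2 * w)) : ℝ) : ℂ) * (1 + I * k / 2 - 1) +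
      ((Real.log (Real.sigmoid (2 * w)) - 2 * w : ℝ) : ℂ) * (1 - I * k / 2 - 1)) = I * k * w := by
      push_cast; ring
    rw [e3]
    push_cast
    ring
  simp_rw [hpt] at hG
  rw [integral_const_mul] at hG
  have hne : (I * k / 2 : ℂ) ≠ 0 := by
    have : (k : ℂ) ≠ 0 := by exact_mod_cast hk
    simp [this]
  rw [show (1 + I * k / 2 : ℂ) = I * k / 2 + 1 by ring, Complex.Gamma_add_one _ hne, mul_assoc,
    Complex.Gamma_mul_Gamma_one_sub, show (I * k / 2 + 1 + (1 - I * k / 2) : ℂ) = 1 + 1 by ring,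
    Complex.Gamma_add_one _ one_ne_zero, Complex.Gamma_one,
    show (Real.pi * (I * k / 2) : ℂ) = ((Real.pi * k / 2 : ℝ) : ℂ) * I by push_cast; ring,
    Complex.sin_mul_I, ← Complex.ofReal_sinh] at hG
  have hs : ((Real.sinh (Real.pi * k / 2) : ℝ) : ℂ) ≠ 0 := by
    norm_cast
    intro h
    rw [Real.sinh_eq_zero] at h
    have := Real.pi_pos.ne'
    have : Real.pi * k / 2 ≠ 0 := by positivity
    exact this h
  have h2 : ∫ w : ℝ, ((1 / Real.cosh w ^ 2 : ℝ) : ℂ) * cexp (I * k * w) =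
    2 * (I * k / 2 * (Real.pi / (((Real.sinh (Real.pi * k / 2) : ℝ) : ℂ) * I))) := by
    rw [hG]; ring
  rw [h2]
  have := Complex.I_ne_zero
  field_simp

/-- Fourier transform of a difference of hyperbolic tangents. -/
lemma ft_tanh {k : ℝ} (hk : k ≠ 0) (x x' : ℝ) :
    ∫ z : ℝ, ((Real.tanh (x - z) - Real.tanh (x' - z) : ℝ) : ℂ) * cexp (I * k * z) =
      (-I * Real.pi / Real.sinh (Real.pi * k / 2)) * (cexp (I * k * x) - cexp (I * k * x')) := by
  have hkc : (k : ℂ) ≠ 0 := by exact_mod_cast hk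
  have hI := Complex.I_ne_zero
  have hsech : ∀ a : ℝ, ∫ z : ℝ, ((1 / Real.cosh (a - z) ^ 2 : ℝ) : ℂ) * cexp (I * k * z) =
      cexp (I * k * a) * (Real.pi * k / Real.sinh (Real.pi * k / 2)) := by
    intro a
    rw [← ft_sech hk, ← integral_const_mul, ← integral_add_right_eq_self _ a]
    refine integral_congr_ae (Filter.Eventually.of_forall fun z => ?_)
    simp only []
    rw [show a - (z + a) = -z by ring, Real.cosh_neg,
      show (I * k * ((z + a : ℝ) : ℂ)) = I * k * a + I * k * z by push_cast; ring, Complex.exp_add]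
    ring
  have hexp : ∀ z : ℝ, ‖cexp (I * k * z)‖ = 1 := by
    intro z
    rw [show (I * k * z : ℂ) = ((k * z : ℝ) : ℂ) * I by push_cast; ring,
      Complex.norm_exp_ofReal_mul_I]
  have hmul : ∀ f : ℝ → ℝ, Integrable f → Integrable (fun z : ℝ => ((f z : ℝ) : ℂ) * cexp (I * k * z)) := by
    intro f hf
    refine hf.ofReal.mul_bdd (c := 1) ?_ ?_
    · exact Continuous.aestronglyMeasurable (by fun_prop)
    · exact Filter.Eventually.of_forall fun z => (hexp z).le
  have hsi : ∀ a : ℝ, Integrable (fun z : ℝ => 1 / Real.cosh (a - z) ^ 2) := fun a =>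
    integrable_sech_sq.comp_sub_left a
  have hparts := integral_mul_deriv_eq_deriv_mul_of_integrable
    (u := fun z : ℝ => ((Real.tanh (x - z) - Real.tanh (x' - z) : ℝ) : ℂ))
    (v := fun z : ℝ => cexp (I * k * z) / (I * k))
    (u' := fun z : ℝ => ((-(1 / Real.cosh (x - z) ^ 2) + 1 / Real.cosh (x' - z) ^ 2 : ℝ) : ℂ))
    (v' := fun z : ℝ => cexp (I * k * z)) ?_ ?_ ?_ ?_ ?_
  · rw [hparts]
    have : ∀ z : ℝ, ((-(1 / Real.cosh (x - z) ^ 2) + 1 / Real.cosh (x' - z) ^ 2 : ℝ) : ℂ) * (cexp (I * k * z) / (I * k)) =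
      (1 / (I * k)) * (((1 / Real.cosh (x' - z) ^ 2 : ℝ) : ℂ) * cexp (I * k * z) - ((1 / Real.cosh (x - z) ^ 2 : ℝ) : ℂ) * cexp (I * k * z)) := by
      intro z; push_cast; ring
    simp_rw [this]
    rw [integral_const_mul, integral_sub (hmul _ (hsi x')) (hmul _ (hsi x)), hsech, hsech]
    field_simp
    rw [Complex.I_sq]
    ring
  · intro z _
    refine HasDerivAt.ofReal_comp ?_
    have h1 := (hasDerivAt_tanh' (x - z)).comp z ((hasDerivAt_id z).const_sub x)
    have h2 := (hasDerivAt_tanh' (x' - z)).comp z ((hasDerivAt_id z).const_sub x')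
    refine (h1.sub h2).congr_deriv ?_
    ring
  · intro z _
    have h1 : HasDerivAt (fun z : ℝ => I * k * (z : ℂ)) (I * k) z := by
      simpa using (Complex.ofRealCLM.hasDerivAt (x := z)).const_mul (I * k : ℂ)
    have := h1.cexp.div_const (I * k)
    refine this.congr_deriv ?_
    field_simp
  · exact hmul _ (integrable_tanh_sub x x')
  · have := (hmul _ ((hsi x).neg.add (hsi x'))).div_const (I * k)
    refine this.congr (Filter.Eventually.of_forall fun z => ?_)
    simp [mul_div_assoc]
  · have := (hmul _ (integrable_tanh_sub x x')).div_const (I * k)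
    refine this.congr (Filter.Eventually.of_forall fun z => ?_)
    simp [mul_div_assoc]

lemma ft_scaled {ap am : ℝ} (hap : 0 < ap) (ham : 0 < am) {y : ℝ} (hy : y ≠ 0) (x x' : ℝ) :
    ∫ z : ℝ, ((Real.tanh (Real.pi * x / am - Real.pi * z / am) -
        Real.tanh (Real.pi * x' / am - Real.pi * z / am) : ℝ) : ℂ) *
          cexp (I * (alphaPar ap am : ℂ) * ((z : ℂ) * (y : ℂ))) =
      (-I * am / Real.sinh (Real.pi * y / ap)) *
        (cexp (I * (alphaPar ap am : ℂ) * ((x : ℂ) * (y : ℂ))) -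
          cexp (I * (alphaPar ap am : ℂ) * ((x' : ℂ) * (y : ℂ)))) := by
  have hk : 2 * y / ap ≠ 0 := by positivity
  have h := ft_tanh hk (Real.pi * x / am) (Real.pi * x' / am)
  have hpi := Real.pi_pos
  have hc := Measure.integral_comp_mul_left (fun z : ℝ => ((Real.tanh (Real.pi * x / am - z) -
    Real.tanh (Real.pi * x' / am - z) : ℝ) : ℂ) * cexp (I * (2 * y / ap : ℝ) * z)) (Real.pi / am)
  have harg : ∀ t : ℝ, I * ((2 * y / ap : ℝ) : ℂ) * ((Real.pi * t / am : ℝ) : ℂ) =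
      I * (alphaPar ap am : ℂ) * ((t : ℂ) * (y : ℂ)) := by
    intro t
    have : ((2 * y / ap : ℝ) : ℂ) * ((Real.pi * t / am : ℝ) : ℂ) =
      (alphaPar ap am : ℂ) * ((t : ℂ) * (y : ℂ)) := by
      norm_cast
      unfold alphaPar
      field_simp
    rw [mul_assoc, this, mul_assoc]
  rw [h, harg, harg] at hc
  have e1 : Real.pi * (2 * y / ap) / 2 = Real.pi * y / ap := by ring
  rw [e1, abs_of_pos (by positivity), Complex.real_smul] at hc
  rw [show (-I * am / Real.sinh (Real.pi * y / ap) : ℂ) =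
    (((Real.pi / am)⁻¹ : ℝ) : ℂ) * (-I * Real.pi / Real.sinh (Real.pi * y / ap)) by
      have : (Real.pi : ℂ) ≠ 0 := by exact_mod_cast hpi.ne'
      have : (am : ℂ) ≠ 0 := by exact_mod_cast ham.ne'
      push_cast
      field_simp, mul_assoc, ← hc]
  refine integral_congr_ae (Filter.Eventually.of_forall fun z => ?_)
  simp only []
  rw [show Real.pi / am * z = Real.pi * z / am by ring, harg]

lemma pr_succ {M : Type*} [CommMonoid M] (n : ℕ) (f : Fin (n + 1) → Fin (n + 1) → M) :
    ∏ q ∈ Finset.univ.filter (fun q : Fin (n + 1) × Fin (n + 1) => q.1 < q.2), f q.1 q.2 =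
    (∏ q ∈ Finset.univ.filter (fun q : Fin n × Fin n => q.1 < q.2),
      f (Fin.castSucc q.1) (Fin.castSucc q.2)) * ∏ j : Fin n, f (Fin.castSucc j) (Fin.last n) := by
  simp only [Finset.prod_filter, Fintype.prod_prod_type]
  rw [Fin.prod_univ_castSucc]
  simp only [Fin.prod_univ_castSucc, Fin.castSucc_lt_castSucc_iff, Fin.castSucc_lt_last, if_true,
    Finset.prod_mul_distrib, lt_irrefl, if_false, mul_one]
  have : ∀ i : Fin n, ¬ (Fin.last n < Fin.castSucc i) := fun i => not_lt.mpr (Fin.le_last _)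
  simp [this]

lemma det_schur {K : Type*} [Field K] (n : ℕ) (A : Matrix (Fin (n + 1)) (Fin (n + 1)) K)
    (hp : A (Fin.last n) (Fin.last n) ≠ 0) :
    A.det = A (Fin.last n) (Fin.last n) *
      (Matrix.of fun j k : Fin n => A j.castSucc k.castSucc -
        A j.castSucc (Fin.last n) / A (Fin.last n) (Fin.last n) * A (Fin.last n) k.castSucc).det := by
  set p := A (Fin.last n) (Fin.last n) with hpd
  let c : Fin (n + 1) → K := fun i => if i = Fin.last n then 0 else A i (Fin.last n) / p
  let B : Matrix (Fin (n + 1)) (Fin (n + 1)) K := fun i j => A i j - c i * A (Fin.last n) j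
  have hcl : c (Fin.last n) = 0 := by simp [c]
  have hBl : ∀ j, B (Fin.last n) j = A (Fin.last n) j := by intro j; simp [B, hcl]
  have h := Matrix.det_eq_of_forall_row_eq_smul_add_const (A := A) (B := B) c (Fin.last n) hcl
    (by intro i j; rw [hBl]; simp [B])
  have hc : ∀ i : Fin n, c i.castSucc = A i.castSucc (Fin.last n) / p := by
    intro i; simp [c, Fin.castSucc_ne_last]
  have hBc : ∀ (i : Fin n) (j : Fin (n + 1)), B i.castSucc j =
      A i.castSucc j - A i.castSucc (Fin.last n) / p * A (Fin.last n) j := by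
    intro i j
    change A i.castSucc j - c i.castSucc * A (Fin.last n) j = _
    rw [hc]
  rw [h, Matrix.det_succ_column B (Fin.last n), Fin.sum_univ_castSucc]
  rw [Finset.sum_eq_zero]
  · rw [zero_add, hBl, ← hpd]
    congr 1
    · rw [← two_mul]; simp
    · congr 1
      ext i j
      rw [Matrix.submatrix_apply, Fin.succAbove_last, hBc]
      rfl
  · intro i _
    have : B i.castSucc (Fin.last n) = 0 := by
      rw [hBc, ← hpd]
      field_simp
      ring
    rw [this]; ring

lemma det_scale {K : Type*} [Field K] (n : ℕ) (r s : Fin n → K) (m : Fin n → Fin n → K) :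
    (Matrix.of fun j k => r j * (s k * m j k)).det =
      (∏ j, r j) * ((∏ k, s k) * (Matrix.of m).det) := by
  rw [← Matrix.det_mul_row, ← Matrix.det_mul_column]
  rfl

lemma cauchy_cosh (n : ℕ) (x z : Fin n → ℝ) :
    (Matrix.of fun j k : Fin n => 1 / Real.cosh (x j - z k)).det =
      (∏ q ∈ Finset.univ.filter (fun q : Fin n × Fin n => q.1 < q.2), Real.sinh (x q.1 - x q.2)) *
      (∏ q ∈ Finset.univ.filter (fun q : Fin n × Fin n => q.1 < q.2), Real.sinh (z q.1 - z q.2)) *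
      ∏ j, ∏ k, (1 / Real.cosh (x j - z k)) := by
  induction n with
  | zero => simp
  | succ n ih =>
    have hC : ∀ a b : ℝ, Real.cosh (a - b) ≠ 0 := fun a b => (Real.cosh_pos _).ne'
    rw [det_schur _ _ (by simp [hC]), pr_succ n (fun a b => Real.sinh (x a - x b)),
      pr_succ n (fun a b => Real.sinh (z a - z b))]
    simp only [Matrix.of_apply]
    have e : (Matrix.of fun j k : Fin n => 1 / Real.cosh (x j.castSucc - z k.castSucc) -
        1 / Real.cosh (x j.castSucc - z (Fin.last n)) /
        (1 / Real.cosh (x (Fin.last n) - z (Fin.last n))) *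
        (1 / Real.cosh (x (Fin.last n) - z k.castSucc))) =
        Matrix.of fun j k : Fin n => (Real.sinh (x j.castSucc - x (Fin.last n)) / Real.cosh (x j.castSucc - z (Fin.last n))) *
          ((Real.sinh (z k.castSucc - z (Fin.last n)) / Real.cosh (x (Fin.last n) - z k.castSucc)) *
           (1 / Real.cosh (x j.castSucc - z k.castSucc))) := by
      ext j k
      simp only [Matrix.of_apply]
      have h1 := hC (x j.castSucc) (z k.castSucc)
      have h2 := hC (x j.castSucc) (z (Fin.last n))
      have h3 := hC (x (Fin.last n)) (z k.castSucc)
      have h4 := hC (x (Fin.last n)) (z (Fin.last n))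
      have key : ∀ a b c d : ℝ, Real.cosh (a - d) * Real.cosh (b - c) - Real.cosh (a - c) * Real.cosh (b - d)
          = Real.sinh (a - b) * Real.sinh (c - d) := by
        intro a b c d
        simp only [Real.cosh_sub, Real.sinh_sub]
        ring
      have := key (x j.castSucc) (x (Fin.last n)) (z k.castSucc) (z (Fin.last n))
      field_simp
      linarith
    rw [e, det_scale n _ _ (fun j k => 1 / Real.cosh (x j.castSucc - z k.castSucc))]
    rw [ih (fun j => x j.castSucc) (fun k => z k.castSucc)]
    simp only [Matrix.of_apply, Fin.prod_univ_castSucc, Finset.prod_mul_distrib, Finset.prod_div_distrib,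
      Finset.prod_const_one]
    have h1 : ∏ i : Fin n, Real.cosh (x i.castSucc - z (Fin.last n)) ≠ 0 :=
      Finset.prod_ne_zero_iff.mpr fun i _ => hC _ _
    have h2 : ∏ i : Fin n, Real.cosh (x (Fin.last n) - z i.castSucc) ≠ 0 :=
      Finset.prod_ne_zero_iff.mpr fun i _ => hC _ _
    have h4 := hC (x (Fin.last n)) (z (Fin.last n))
    field_simp

lemma cauchy_tanh (n : ℕ) (x : Fin (n + 1) → ℝ) (z : Fin n → ℝ) :
    (Matrix.of fun j k : Fin n => Real.tanh (x j.castSucc - z k) - Real.tanh (x (Fin.last n) - z k)).det =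
      (∏ q ∈ Finset.univ.filter (fun q : Fin (n + 1) × Fin (n + 1) => q.1 < q.2), Real.sinh (x q.1 - x q.2)) *
      (∏ q ∈ Finset.univ.filter (fun q : Fin n × Fin n => q.1 < q.2), Real.sinh (z q.1 - z q.2)) *
      ∏ j, ∏ k, (1 / Real.cosh (x j - z k)) := by
  have e : (Matrix.of fun j k : Fin n => Real.tanh (x j.castSucc - z k) - Real.tanh (x (Fin.last n) - z k)) =
    Matrix.of fun j k : Fin n => Real.sinh (x j.castSucc - x (Fin.last n)) *
          ((1 / Real.cosh (x (Fin.last n) - z k)) *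
           (1 / Real.cosh (x j.castSucc - z k))) := by
    ext j k
    simp only [Matrix.of_apply, tanh_sub_tanh]
    rw [show x j.castSucc - z k - (x (Fin.last n) - z k) = x j.castSucc - x (Fin.last n) by ring]
    field_simp
  rw [e, det_scale n _ _ (fun j k => 1 / Real.cosh (x j.castSucc - z k)), cauchy_cosh n (fun j => x j.castSucc),
    pr_succ n (fun a b => Real.sinh (x a - x b))]
  simp only [Fin.prod_univ_castSucc]
  ring

/-- Andréief's identity. -/
lemma andreief (n : ℕ) (f g : Fin n → ℝ → ℂ) (h : ∀ i j, Integrable (fun t => f i t * g j t)) :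
    Integrable (fun z : Fin n → ℝ => (Matrix.of fun j k => f j (z k)).det *
      (Matrix.of fun j k => g k (z j)).det) ∧
    ∫ z : Fin n → ℝ, (Matrix.of fun j k => f j (z k)).det * (Matrix.of fun j k => g k (z j)).det =
      (Nat.factorial n : ℂ) * (Matrix.of fun j k => ∫ t, f j t * g k t).det := by
  have hexp : ∀ z : Fin n → ℝ, (Matrix.of fun j k => f j (z k)).det *
      (Matrix.of fun j k => g k (z j)).det = ∑ τ : Equiv.Perm (Fin n), ∑ σ : Equiv.Perm (Fin n),
        (((Equiv.Perm.sign τ : ℤ) : ℂ) * ((Equiv.Perm.sign σ : ℤ) : ℂ)) * ∏ k, (f (σ k) (z k) * g (τ k) (z k)) := by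
    intro z
    rw [← Matrix.det_transpose (Matrix.of fun j k => g k (z j)), Matrix.det_apply', Matrix.det_apply',
      Finset.sum_mul_sum, Finset.sum_comm]
    refine Finset.sum_congr rfl fun τ _ => Finset.sum_congr rfl fun σ _ => ?_
    simp only [Matrix.of_apply, Matrix.transpose_apply, Finset.prod_mul_distrib]
    ring
  have hint : ∀ σ τ : Equiv.Perm (Fin n),
      Integrable (fun z : Fin n → ℝ => ∏ k, (f (σ k) (z k) * g (τ k) (z k))) := fun σ τ =>
    Integrable.fintype_prod (f := fun k t => f (σ k) t * g (τ k) t) (fun k => h _ _)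
  simp_rw [hexp]
  refine ⟨integrable_finsetSum _ fun τ _ => integrable_finsetSum _ fun σ _ =>
    (hint σ τ).const_mul _, ?_⟩
  rw [integral_finsetSum _ fun τ _ => integrable_finsetSum _ fun σ _ => (hint σ τ).const_mul _]
  have : ∀ τ : Equiv.Perm (Fin n), ∫ z : Fin n → ℝ, ∑ σ : Equiv.Perm (Fin n),
        (((Equiv.Perm.sign τ : ℤ) : ℂ) * ((Equiv.Perm.sign σ : ℤ) : ℂ)) * ∏ k, (f (σ k) (z k) * g (τ k) (z k)) =
        (Matrix.of fun j k => ∫ t, f j t * g k t).det := by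
    intro τ
    rw [integral_finsetSum _ fun σ _ => (hint σ τ).const_mul _]
    have hd := Matrix.det_permute' τ (Matrix.of fun j k => ∫ t, f j t * g k t)
    rw [Matrix.det_apply' (Matrix.submatrix _ _ _)] at hd
    have hs : (((Equiv.Perm.sign τ : ℤ) : ℂ) * ((Equiv.Perm.sign τ : ℤ) : ℂ)) = 1 := by
      norm_cast
      simp
    rw [← one_mul (Matrix.det _), ← hs, mul_assoc, ← hd, Finset.mul_sum]
    refine Finset.sum_congr rfl fun σ _ => ?_
    rw [integral_const_mul, integral_fintype_prod_volume_eq_prod (f := fun k t => f (σ k) t * g (τ k) t)]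
    simp [mul_assoc]
  simp_rw [this]
  simp [Fintype.card_perm]

/-- Product over pairs `j < k`. -/
def PP {M : Type*} [CommMonoid M] (n : ℕ) (f : Fin n → Fin n → M) : M :=
  ∏ q ∈ Finset.univ.filter (fun q : Fin n × Fin n => q.1 < q.2), f q.1 q.2

lemma PP_succ {M : Type*} [CommMonoid M] (n : ℕ) (f : Fin (n + 1) → Fin (n + 1) → M) :
    PP (n + 1) f = PP n (fun a b => f a.castSucc b.castSucc) *
      ∏ j : Fin n, f (Fin.castSucc j) (Fin.last n) := pr_succ n f

lemma PP_zero {M : Type*} [CommMonoid M] (f : Fin 0 → Fin 0 → M) : PP 0 f = 1 := by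
  simp [PP]

lemma PP_mul {M : Type*} [CommMonoid M] (n : ℕ) (f g : Fin n → Fin n → M) :
    PP n (fun a b => f a b * g a b) = PP n f * PP n g := Finset.prod_mul_distrib

lemma PP_inv (n : ℕ) (f : Fin n → Fin n → ℂ) :
    PP n (fun a b => (f a b)⁻¹) = (PP n f)⁻¹ := by simp [PP]

lemma PP_ofReal (n : ℕ) (f : Fin n → Fin n → ℝ) :
    ((PP n f : ℝ) : ℂ) = PP n (fun a b => ((f a b : ℝ) : ℂ)) := by simp [PP]

lemma PP_abs (n : ℕ) (f : Fin n → Fin n → ℝ) :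
    |PP n f| = PP n (fun a b => |f a b|) := by simp [PP, Finset.abs_prod]

lemma PP_outer (n : ℕ) (a : Fin (n + 1) → ℝ) :
    PP (n + 1) (fun i j => a i * a j) = ∏ k, a k ^ n := by
  induction n with
  | zero => simp [PP_succ, PP_zero]
  | succ n ih =>
    rw [PP_succ, ih (fun i => a i.castSucc), Fin.prod_univ_castSucc (n := n + 1),
      Finset.prod_mul_distrib]
    simp only [pow_succ, Finset.prod_mul_distrib, Finset.prod_const, Finset.card_univ,
      Fintype.card_fin]
    ring

lemma quarter (n : ℕ) : PP (n + 1) (fun _ _ => (1 / 4 : ℝ)) = ∏ _j : Fin (n + 1), ∏ _k : Fin n, (1 / 2 : ℝ) := by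
  induction n with
  | zero => simp [PP_succ, PP_zero]
  | succ n ih =>
    rw [PP_succ, ih]
    simp only [Finset.prod_const, Finset.card_univ, Fintype.card_fin]
    rw [show (1 / 4 : ℝ) = (1 / 2) ^ 2 by norm_num, ← pow_mul, ← pow_mul, ← pow_mul, ← pow_add]
    congr 1; ring

lemma det_bound (n : ℕ) (A : Fin n → Fin n → ℝ) (b : Fin n → ℝ) (h : ∀ j k, |A j k| ≤ b k) :
    |(Matrix.of A).det| ≤ (Nat.factorial n : ℝ) * ∏ k, b k := by
  rw [Matrix.det_apply']
  refine (Finset.abs_sum_le_sum_abs _ _).trans ?_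
  have : ∀ σ ∈ (Finset.univ : Finset (Equiv.Perm (Fin n))),
      |((Equiv.Perm.sign σ : ℤ) : ℝ) * ∏ i, Matrix.of A (σ i) i| ≤ ∏ k, b k := by
    intro σ _
    rw [abs_mul, Finset.abs_prod]
    have h1 : |((Equiv.Perm.sign σ : ℤ) : ℝ)| = 1 := by
      rcases Int.units_eq_one_or (Equiv.Perm.sign σ) with h | h <;> simp [h]
    rw [h1, one_mul]
    exact Finset.prod_le_prod (fun _ _ => abs_nonneg _) (fun i _ => h _ _)
  refine (Finset.sum_le_card_nsmul _ _ _ this).trans (le_of_eq ?_)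
  simp [Fintype.card_perm]

lemma integrable_weight {am : ℝ} (ham : 0 < am) (n : ℕ) {s : ℝ} (hs : 0 < s) :
    Integrable (fun z : Fin n → ℝ => ∏ k, Real.exp (-(s * |Real.pi * z k / am|))) := by
  refine Integrable.fintype_prod (f := fun (_ : Fin n) t => Real.exp (-(s * |Real.pi * t / am|)))
    fun k => ?_
  have hpi := Real.pi_pos
  refine (integrable_exp_neg_abs' (s := s * (Real.pi / am)) (by positivity)).congr
    (Filter.Eventually.of_forall fun t => ?_)
  simp only []
  rw [show Real.pi * t / am = (Real.pi / am) * t by ring, abs_mul,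
    abs_of_pos (show 0 < Real.pi / am by positivity), mul_assoc]

/-- the integrand -/
noncomputable def Kint (ap am : ℝ) (n : ℕ) (x y : Fin (n + 1) → ℝ) (z : Fin n → ℝ) : ℂ :=
  (∏ q ∈ Finset.univ.filter (fun q : Fin n × Fin n => q.1 < q.2),
    ((4 * Real.sinh (Real.pi * (z q.1 - z q.2) / am) ^ 2 : ℝ) : ℂ)) *
  (∏ j : Fin (n + 1), ∏ k : Fin n,
    ((1 / (2 * Real.cosh (Real.pi * (x j - z k) / am)) : ℝ) : ℂ)) *
  Jfree ap am n z (fun j => y (Fin.castSucc j) - y (Fin.last n))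

noncomputable def cc (n : ℕ) : ℝ := PP n (fun _ _ => 4) * PP (n + 1) (fun _ _ => (1 / 4 : ℝ))

/-- the product of hyperbolic sines -/
noncomputable def SS (am : ℝ) (n : ℕ) (x : Fin n → ℝ) : ℝ :=
  PP n (fun a b => Real.sinh (Real.pi * x a / am - Real.pi * x b / am))

noncomputable def CH (am : ℝ) (n : ℕ) (x : Fin (n + 1) → ℝ) (z : Fin n → ℝ) : ℝ :=
  ∏ j, ∏ k, (1 / Real.cosh (Real.pi * x j / am - Real.pi * z k / am))

lemma Kint_eq (ap am : ℝ) (n : ℕ) (x y : Fin (n + 1) → ℝ) (z : Fin n → ℝ) :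
    Kint ap am n x y z = ((cc n * SS am n z ^ 2 * CH am n x z : ℝ) : ℂ) *
      Jfree ap am n z (fun j => y (Fin.castSucc j) - y (Fin.last n)) := by
  unfold Kint
  congr 1
  have hsub : ∀ a b : ℝ, Real.pi * (a - b) / am = Real.pi * a / am - Real.pi * b / am := by
    intro a b; ring
  have h1 : PP n (fun a b => 4 * Real.sinh (Real.pi * (z a - z b) / am) ^ 2) =
      PP n (fun _ _ => 4) * SS am n z ^ 2 := by
    have h0 : (fun a b => 4 * Real.sinh (Real.pi * (z a - z b) / am) ^ 2) =
        fun a b => (4 : ℝ) * (Real.sinh (Real.pi * z a / am - Real.pi * z b / am) *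
          Real.sinh (Real.pi * z a / am - Real.pi * z b / am)) := by
      funext a b
      rw [hsub, sq]
    rw [h0, PP_mul n (fun _ _ => 4), PP_mul n, sq, SS]
  have h2 : ∏ j : Fin (n + 1), ∏ k : Fin n, (1 / (2 * Real.cosh (Real.pi * (x j - z k) / am))) =
      PP (n + 1) (fun _ _ => (1 / 4 : ℝ)) * CH am n x z := by
    rw [quarter, CH, ← Finset.prod_mul_distrib]
    refine Finset.prod_congr rfl fun j _ => ?_
    rw [← Finset.prod_mul_distrib]
    refine Finset.prod_congr rfl fun k _ => ?_
    rw [hsub]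
    field_simp
  rw [cc, show PP n (fun _ _ => (4 : ℝ)) * PP (n + 1) (fun _ _ => (1 / 4 : ℝ)) * SS am n z ^ 2 * CH am n x z
    = (PP n (fun _ _ => 4) * SS am n z ^ 2) * (PP (n + 1) (fun _ _ => (1 / 4 : ℝ)) * CH am n x z) by ring,
    ← h1, ← h2]
  unfold PP
  push_cast
  rfl

lemma Jfree_succ (ap am : ℝ) (N : ℕ) (x y : Fin (N + 2) → ℝ) :
    Jfree ap am (N + 2) x y = (Complex.exp (Complex.I * (alphaPar ap am : ℂ) * (y (Fin.last (N + 1)) : ℂ) *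
          ∑ j : Fin (N + 2), (x j : ℂ)) / (Nat.factorial (N + 1) : ℂ)) *
        ∫ z : Fin (N + 1) → ℝ, Kint ap am (N + 1) x y z := by
  rw [Jfree]
  rfl

lemma cauchy_SS (am : ℝ) (n : ℕ) (x : Fin (n + 1) → ℝ) (z : Fin n → ℝ) :
    (Matrix.of fun j k : Fin n => Real.tanh (Real.pi * x j.castSucc / am - Real.pi * z k / am) -
      Real.tanh (Real.pi * x (Fin.last n) / am - Real.pi * z k / am)).det =
      SS am (n + 1) x * SS am n z * CH am n x z :=
  cauchy_tanh n (fun j => Real.pi * x j / am) (fun k => Real.pi * z k / am)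

lemma cc_nonneg (n : ℕ) : 0 ≤ cc n :=
  mul_nonneg (Finset.prod_nonneg fun _ _ => by norm_num) (Finset.prod_nonneg fun _ _ => by norm_num)

lemma CH_nonneg (am : ℝ) (n : ℕ) (x : Fin (n + 1) → ℝ) (z : Fin n → ℝ) : 0 ≤ CH am n x z :=
  Finset.prod_nonneg fun _ _ => Finset.prod_nonneg fun _ _ =>
    (one_div_pos.mpr (Real.cosh_pos _)).le

lemma Kint_norm (ap am : ℝ) (n : ℕ) (x y : Fin (n + 1) → ℝ) (z : Fin n → ℝ) :
    ‖Kint ap am n x y z‖ = cc n * |SS am n z| * CH am n x z *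
      (|SS am n z| * ‖Jfree ap am n z (fun j => y (Fin.castSucc j) - y (Fin.last n))‖) := by
  rw [Kint_eq, norm_mul, Complex.norm_real, Real.norm_eq_abs,
    abs_of_nonneg (mul_nonneg (mul_nonneg (cc_nonneg n) (sq_nonneg _)) (CH_nonneg am n x z)),
    ← sq_abs (SS am n z)]
  ring

lemma SS_continuous (am : ℝ) (n : ℕ) : Continuous (fun z => SS am n z) := by
  unfold SS PP
  exact continuous_finsetProd _ fun q _ => Real.continuous_sinh.comp (by fun_prop)

lemma CH_continuous (am : ℝ) (n : ℕ) :
    Continuous (fun p : (Fin (n + 1) → ℝ) × (Fin n → ℝ) => CH am n p.1 p.2) := by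
  unfold CH
  refine continuous_finsetProd _ fun j _ => continuous_finsetProd _ fun k _ => ?_
  exact continuous_const.div (Real.continuous_cosh.comp (by fun_prop)) fun p => (Real.cosh_pos _).ne'

lemma Kint_measurable (ap am : ℝ) (n : ℕ) (y : Fin (n + 1) → ℝ)
    (h : Measurable (fun z => Jfree ap am n z (fun j => y (Fin.castSucc j) - y (Fin.last n)))) :
    Measurable (fun p : (Fin (n + 1) → ℝ) × (Fin n → ℝ) => Kint ap am n p.1 y p.2) := by
  simp_rw [Kint_eq]
  refine Measurable.mul ?_ (h.comp measurable_snd)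
  refine Complex.measurable_ofReal.comp ?_
  refine Measurable.mul ?_ (CH_continuous am n).measurable
  exact (((SS_continuous am n).measurable.comp measurable_snd).pow_const 2).const_mul _

lemma Jfree_measurable (ap am : ℝ) (N : ℕ) (y : Fin (N + 1) → ℝ) :
    Measurable (fun x => Jfree ap am (N + 1) x y) := by
  induction N with
  | zero =>
    simp only [Jfree]
    exact Continuous.measurable (by fun_prop)
  | succ N ih =>
    simp_rw [Jfree_succ]
    refine Measurable.mul (Continuous.measurable (by fun_prop)) ?_
    have := (Kint_measurable ap am (N + 1) y (ih _)).stronglyMeasurable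
    exact (this.integral_prod_right').measurable

lemma Jfree_bound (ap : ℝ) {am : ℝ} (ham : 0 < am) (N : ℕ) (y : Fin (N + 1) → ℝ) {ε : ℝ} (hε : 0 < ε) :
    ∃ C : ℝ, 0 ≤ C ∧ ∀ x : Fin (N + 1) → ℝ, |SS am (N + 1) x| * ‖Jfree ap am (N + 1) x y‖ ≤
      C * Real.exp (ε * ∑ j, |Real.pi * x j / am|) := by
  induction N generalizing ε with
  | zero =>
    refine ⟨1, zero_le_one, fun x => ?_⟩
    have h1 : SS am 1 x = 1 := by simp [SS, PP_succ, PP_zero]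
    have h2 : ‖Jfree ap am 1 x y‖ = 1 := by
      simp only [Jfree]
      rw [show I * (alphaPar ap am : ℂ) * (x 0 : ℂ) * (y 0 : ℂ) = ((alphaPar ap am * x 0 * y 0 : ℝ) : ℂ) * I by
        push_cast; ring, Complex.norm_exp_ofReal_mul_I]
    simp only [zero_add, h1, h2]
    have : 1 ≤ Real.exp (ε * ∑ j, |Real.pi * x j / am|) :=
      Real.one_le_exp (mul_nonneg hε.le (Finset.sum_nonneg fun _ _ => abs_nonneg _))
    simpa using this
  | succ N ih =>
    have hn0 : (0 : ℝ) < ((N + 1 : ℕ) : ℝ) := by positivity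
    set s : ℝ := min (ε / ((N + 1 : ℕ) : ℝ)) 2 with hsd
    have hs : 0 < s := lt_min (by positivity) two_pos
    have hs2 : s ≤ 2 := min_le_right _ _
    have hsn : ((N + 1 : ℕ) : ℝ) * s ≤ ε := by
      have : s ≤ ε / ((N + 1 : ℕ) : ℝ) := min_le_left _ _
      rw [le_div_iff₀ hn0] at this
      linarith
    obtain ⟨C, hC0, hC⟩ := ih (fun j => y (Fin.castSucc j) - y (Fin.last (N + 1))) (half_pos hs)
    set W : (Fin (N + 1) → ℝ) → ℝ := fun z => ∏ k, Real.exp (-(s / 2 * |Real.pi * z k / am|)) with hW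
    have hWi : Integrable W := integrable_weight ham (N + 1) (half_pos hs)
    set B : ℝ := cc (N + 1) * C * (Nat.factorial (N + 1) : ℝ) * 8 ^ (N + 1) with hB
    have hB0 : 0 ≤ B := by have := cc_nonneg (N + 1); positivity
    refine ⟨B * ∫ z, W z, mul_nonneg hB0 (integral_nonneg fun z =>
      Finset.prod_nonneg fun _ _ => (Real.exp_pos _).le), fun x => ?_⟩
    set S : ℝ := ∑ j, |Real.pi * x j / am| with hS
    have hS0 : 0 ≤ S := Finset.sum_nonneg fun _ _ => abs_nonneg _
    have hpt : ∀ z, ‖((SS am (N + 1 + 1) x : ℝ) : ℂ) * Kint ap am (N + 1) x y z‖ ≤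
        B * Real.exp (((N + 1 : ℕ) : ℝ) * s * S) * W z := by
      intro z
      rw [norm_mul, Kint_norm, Complex.norm_real, Real.norm_eq_abs]
      have hdet := det_bound (N + 1) (fun j k : Fin (N + 1) => Real.tanh (Real.pi * x j.castSucc / am - Real.pi * z k / am) -
          Real.tanh (Real.pi * x (Fin.last (N + 1)) / am - Real.pi * z k / am))
        (fun k => 8 * Real.exp (s * (S - |Real.pi * z k / am|))) (by
          intro j k
          refine (tanh_bound hs.le hs2 _ _ _).trans ?_
          gcongr
          rw [hS, Fin.sum_univ_castSucc]
          gcongr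
          exact Finset.single_le_sum (f := fun i : Fin (N + 1) => |Real.pi * x i.castSucc / am|)
            (fun _ _ => abs_nonneg _) (Finset.mem_univ j))
      rw [cauchy_SS, abs_mul, abs_mul, abs_of_nonneg (CH_nonneg am (N + 1) x z)] at hdet
      have hprod : (∏ k : Fin (N + 1), (8 * Real.exp (s * (S - |Real.pi * z k / am|)))) *
          Real.exp (s / 2 * ∑ j, |Real.pi * z j / am|) = 8 ^ (N + 1) * Real.exp (((N + 1 : ℕ) : ℝ) * s * S) * W z := by
        rw [Finset.prod_mul_distrib, hW]
        simp only [Finset.prod_const, Finset.card_univ, Fintype.card_fin, ← Real.exp_sum]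
        rw [mul_assoc, mul_assoc, ← Real.exp_add, ← Real.exp_add]
        congr 2
        simp only [mul_sub, Finset.sum_sub_distrib, Finset.sum_neg_distrib, ← Finset.mul_sum,
          Finset.sum_const, Finset.card_univ, Fintype.card_fin, nsmul_eq_mul]
        ring
      calc |SS am (N + 1 + 1) x| * (cc (N + 1) * |SS am (N + 1) z| * CH am (N + 1) x z *
            (|SS am (N + 1) z| * ‖Jfree ap am (N + 1) z (fun j => y (Fin.castSucc j) - y (Fin.last (N + 1)))‖))
          = cc (N + 1) * (|SS am (N + 1 + 1) x| * |SS am (N + 1) z| * CH am (N + 1) x z) *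
            (|SS am (N + 1) z| * ‖Jfree ap am (N + 1) z (fun j => y (Fin.castSucc j) - y (Fin.last (N + 1)))‖) := by ring
        _ ≤ cc (N + 1) * ((Nat.factorial (N + 1) : ℝ) * ∏ k : Fin (N + 1), (8 * Real.exp (s * (S - |Real.pi * z k / am|)))) *
            (C * Real.exp (s / 2 * ∑ j, |Real.pi * z j / am|)) := by
            have h1 := cc_nonneg (N + 1)
            have h2 := hC z
            gcongr
        _ = cc (N + 1) * C * (Nat.factorial (N + 1) : ℝ) * ((∏ k : Fin (N + 1), (8 * Real.exp (s * (S - |Real.pi * z k / am|)))) *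
            Real.exp (s / 2 * ∑ j, |Real.pi * z j / am|)) := by ring
        _ = _ := by rw [hprod, hB]; ring
    have hI := norm_integral_le_of_norm_le (hWi.const_mul (B * Real.exp (((N + 1 : ℕ) : ℝ) * s * S)))
      (Filter.Eventually.of_forall hpt)
    rw [integral_const_mul, integral_const_mul, norm_mul, Complex.norm_real, Real.norm_eq_abs] at hI
    rw [Jfree_succ, norm_mul, norm_div]
    have he : ‖cexp (I * (alphaPar ap am : ℂ) * (y (Fin.last (N + 1)) : ℂ) *
          ∑ j : Fin (N + 2), (x j : ℂ))‖ = 1 := by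
      rw [show I * (alphaPar ap am : ℂ) * (y (Fin.last (N + 1)) : ℂ) *
          ∑ j : Fin (N + 2), (x j : ℂ) = ((alphaPar ap am * y (Fin.last (N + 1)) * ∑ j : Fin (N + 2), x j : ℝ) : ℂ) * I by
        push_cast; ring, Complex.norm_exp_ofReal_mul_I]
    rw [he, Complex.norm_natCast]
    have hf : (1 : ℝ) / (Nat.factorial (N + 1) : ℝ) ≤ 1 := by
      rw [div_le_one (by positivity)]
      exact_mod_cast Nat.factorial_pos _
    calc |SS am (N + 1 + 1) x| * (1 / (Nat.factorial (N + 1) : ℝ) * ‖∫ z, Kint ap am (N + 1) x y z‖)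
        = (1 / (Nat.factorial (N + 1) : ℝ)) * (|SS am (N + 1 + 1) x| * ‖∫ z, Kint ap am (N + 1) x y z‖) := by ring
      _ ≤ 1 * (|SS am (N + 1 + 1) x| * ‖∫ z, Kint ap am (N + 1) x y z‖) := by gcongr
      _ ≤ B * Real.exp (((N + 1 : ℕ) : ℝ) * s * S) * ∫ z, W z := by rw [one_mul]; exact hI
      _ = (B * ∫ z, W z) * Real.exp (((N + 1 : ℕ) : ℝ) * s * S) := by ring
      _ ≤ (B * ∫ z, W z) * Real.exp (ε * S) := by
        have : 0 ≤ B * ∫ z, W z := mul_nonneg hB0 (integral_nonneg fun z =>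
          Finset.prod_nonneg fun _ _ => (Real.exp_pos _).le)
        gcongr

lemma Kint_integrable (ap : ℝ) {am : ℝ} (ham : 0 < am) (N : ℕ) (x y : Fin (N + 2) → ℝ) :
    Integrable (Kint ap am (N + 1) x y) := by
  obtain ⟨C, hC0, hC⟩ := Jfree_bound ap ham N
    (fun j => y (Fin.castSucc j) - y (Fin.last (N + 1))) one_pos
  set D : ℝ := ∏ j : Fin (N + 2), ∏ _k : Fin (N + 1), (2 * Real.exp |Real.pi * x j / am|) with hD
  have hW := (integrable_weight ham (N + 1) one_pos).const_mul (cc (N + 1) * D * C)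
  refine hW.mono' ?_ (Filter.Eventually.of_forall fun z => ?_)
  · exact ((Kint_measurable ap am (N + 1) y (Jfree_measurable ap am N _)).comp
      (measurable_const.prodMk measurable_id)).aestronglyMeasurable
  · rw [Kint_norm]
    have h1 : |SS am (N + 1) z| ≤ ∏ k, Real.exp |Real.pi * z k / am| ^ N := by
      rw [SS, PP_abs, ← PP_outer]
      refine Finset.prod_le_prod (fun _ _ => abs_nonneg _) fun q _ => ?_
      refine (abs_sinh_le _).trans ?_
      show _ ≤ Real.exp |Real.pi * z q.1 / am| * Real.exp |Real.pi * z q.2 / am|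
      rw [← Real.exp_add]
      gcongr
      exact abs_sub _ _
    have h2 : CH am (N + 1) x z ≤ D * ∏ k, Real.exp (-|Real.pi * z k / am|) ^ (N + 2) := by
      have : D * ∏ k, Real.exp (-|Real.pi * z k / am|) ^ (N + 2) =
          ∏ j : Fin (N + 2), ∏ k : Fin (N + 1), ((2 * Real.exp |Real.pi * x j / am|) * Real.exp (-|Real.pi * z k / am|)) := by
        simp only [Finset.prod_mul_distrib, hD]
        simp [Finset.prod_pow]
      rw [this]
      refine Finset.prod_le_prod (fun _ _ => Finset.prod_nonneg fun _ _ =>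
        (one_div_pos.mpr (Real.cosh_pos _)).le) fun j _ => Finset.prod_le_prod (fun _ _ =>
        (one_div_pos.mpr (Real.cosh_pos _)).le) fun k _ => ?_
      refine (inv_cosh_le _).trans ?_
      rw [mul_assoc, ← Real.exp_add]
      gcongr
      have := abs_sub_abs_le_abs_sub (Real.pi * z k / am) (Real.pi * x j / am)
      rw [abs_sub_comm] at this
      linarith
    have h3 := hC z
    have hcc := cc_nonneg (N + 1)
    have hD0 : 0 ≤ D := by positivity
    calc _ ≤ cc (N + 1) * (∏ k, Real.exp |Real.pi * z k / am| ^ N) *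
          (D * ∏ k, Real.exp (-|Real.pi * z k / am|) ^ (N + 2)) *
          (C * Real.exp (1 * ∑ j, |Real.pi * z j / am|)) := by
          have := CH_nonneg am (N + 1) x z
          gcongr
      _ = cc (N + 1) * D * C * ((∏ k, Real.exp |Real.pi * z k / am| ^ N) *
          (∏ k, Real.exp (-|Real.pi * z k / am|) ^ (N + 2)) * ∏ k, Real.exp |Real.pi * z k / am|) := by
          rw [one_mul, Real.exp_sum]; ring
      _ = _ := by
          rw [← Finset.prod_mul_distrib, ← Finset.prod_mul_distrib]
          congr 1
          refine Finset.prod_congr rfl fun k _ => ?_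
          rw [← Real.exp_nat_mul, ← Real.exp_nat_mul, ← Real.exp_add, ← Real.exp_add]
          congr 1
          push_cast
          ring


lemma SS_ne_zero {am : ℝ} (ham : 0 < am) (n : ℕ) (x : Fin n → ℝ)
    (h : ∀ j k : Fin n, j < k → x j ≠ x k) : SS am n x ≠ 0 := by
  unfold SS PP
  refine Finset.prod_ne_zero_iff.mpr fun q hq => ?_
  have hq' := h q.1 q.2 (Finset.mem_filter.mp hq).2
  rw [Ne, Real.sinh_eq_zero, show Real.pi * x q.1 / am - Real.pi * x q.2 / am =
    Real.pi * (x q.1 - x q.2) / am by ring]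
  exact div_ne_zero (mul_ne_zero Real.pi_ne_zero (sub_ne_zero.mpr hq')) ham.ne'

lemma ne_of_SS {am : ℝ} (n : ℕ) (x : Fin n → ℝ) (h : SS am n x ≠ 0) :
    ∀ j k : Fin n, j < k → x j ≠ x k := by
  intro j k hjk he
  apply h
  unfold SS PP
  refine Finset.prod_eq_zero (i := (j, k)) (by simpa using hjk) ?_
  simp [he]

/-- exponential matrix determinant -/
noncomputable def ED (ap am : ℝ) (n : ℕ) (x y : Fin n → ℝ) : ℂ :=
  (Matrix.of fun j k : Fin n => cexp (I * (alphaPar ap am : ℂ) * ((x j : ℂ) * (y k : ℂ)))).det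

noncomputable def QQ (n : ℕ) : ℂ := PP n (fun _ _ => (1 / 4 : ℂ))

noncomputable def YY (ap am : ℝ) (n : ℕ) (y : Fin n → ℝ) : ℂ :=
  PP n (fun a b => -I * (am : ℂ) / (Real.sinh (Real.pi * (y a - y b) / ap) : ℂ))

lemma cc_QQ (n : ℕ) : (cc n : ℂ) * QQ n = QQ (n + 1) := by
  have h : PP n (fun _ _ => (4 : ℂ)) * PP n (fun _ _ => (1 / 4 : ℂ)) = 1 := by
    rw [← PP_mul]
    simp [PP]
  unfold cc QQ
  rw [Complex.ofReal_mul, PP_ofReal, PP_ofReal]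
  push_cast
  rw [mul_right_comm, h, one_mul]

lemma ofReal_det (n : ℕ) (A : Fin n → Fin n → ℝ) :
    (Matrix.of fun j k => ((A j k : ℝ) : ℂ)).det = (((Matrix.of A).det : ℝ) : ℂ) := by
  rw [Matrix.det_apply', Matrix.det_apply']
  push_cast
  rfl

lemma YY_succ (ap am : ℝ) (n : ℕ) (y : Fin (n + 1) → ℝ) :
    YY ap am (n + 1) y = YY ap am n (fun j => y j.castSucc - y (Fin.last n)) *
      ∏ k : Fin n, (-I * (am : ℂ) / (Real.sinh (Real.pi * (y k.castSucc - y (Fin.last n)) / ap) : ℂ)) := by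
  unfold YY
  rw [PP_succ]
  simp only [sub_sub_sub_cancel_right]

lemma ED_succ (ap am : ℝ) (n : ℕ) (x y : Fin (n + 1) → ℝ) :
    ED ap am (n + 1) x y = cexp (I * (alphaPar ap am : ℂ) * (y (Fin.last n) : ℂ) * ∑ j, (x j : ℂ)) *
      (Matrix.of fun j k : Fin n =>
        cexp (I * (alphaPar ap am : ℂ) * ((x j.castSucc : ℂ) * ((y k.castSucc - y (Fin.last n) : ℝ) : ℂ))) -
        cexp (I * (alphaPar ap am : ℂ) * ((x (Fin.last n) : ℂ) * ((y k.castSucc - y (Fin.last n) : ℝ) : ℂ)))).det := by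
  have h1 := det_scale (n + 1) (fun j => cexp (I * (alphaPar ap am : ℂ) * ((x j : ℂ) * (y (Fin.last n) : ℂ))))
    (fun _ => 1) (fun j k => cexp (I * (alphaPar ap am : ℂ) * ((x j : ℂ) * ((y k - y (Fin.last n) : ℝ) : ℂ))))
  have h2 := det_schur n (Matrix.of fun j k : Fin (n + 1) =>
      cexp (I * (alphaPar ap am : ℂ) * ((x j : ℂ) * ((y k - y (Fin.last n) : ℝ) : ℂ)))) (by simp)
  have h3 : (fun j k : Fin (n + 1) => cexp (I * (alphaPar ap am : ℂ) * ((x j : ℂ) * (y (Fin.last n) : ℂ))) *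
      (1 * cexp (I * (alphaPar ap am : ℂ) * ((x j : ℂ) * ((y k - y (Fin.last n) : ℝ) : ℂ))))) =
      fun j k => cexp (I * (alphaPar ap am : ℂ) * ((x j : ℂ) * (y k : ℂ))) := by
    funext j k
    rw [one_mul, ← Complex.exp_add]
    congr 1
    push_cast
    ring
  have h4 : ∏ j, cexp (I * (alphaPar ap am : ℂ) * ((x j : ℂ) * (y (Fin.last n) : ℂ))) =
      cexp (I * (alphaPar ap am : ℂ) * (y (Fin.last n) : ℂ) * ∑ j, (x j : ℂ)) := by
    rw [← Complex.exp_sum, Finset.mul_sum]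
    congr 1
    refine Finset.sum_congr rfl fun j _ => ?_
    ring
  rw [h3, h2, h4] at h1
  unfold ED
  rw [h1]
  simp

lemma fg_integrable {ap am : ℝ} (ham : 0 < am) (x x' y : ℝ) :
    Integrable (fun z : ℝ => ((Real.tanh (Real.pi * x / am - Real.pi * z / am) -
      Real.tanh (Real.pi * x' / am - Real.pi * z / am) : ℝ) : ℂ) *
      cexp (I * (alphaPar ap am : ℂ) * ((z : ℂ) * (y : ℂ)))) := by
  have hc : Real.pi / am ≠ 0 := div_ne_zero Real.pi_ne_zero ham.ne'
  have h1 : Integrable (fun z : ℝ => Real.tanh (Real.pi * x / am - Real.pi * z / am) -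
      Real.tanh (Real.pi * x' / am - Real.pi * z / am)) := by
    refine ((integrable_tanh_sub (Real.pi * x / am) (Real.pi * x' / am)).comp_mul_left' hc).congr
      (Filter.Eventually.of_forall fun z => ?_)
    simp only [div_mul_eq_mul_div]
  refine (h1.ofReal (𝕜 := ℂ)).mul_bdd (c := 1) (Continuous.aestronglyMeasurable (by fun_prop))
    (Filter.Eventually.of_forall fun z => ?_)
  rw [show I * (alphaPar ap am : ℂ) * ((z : ℂ) * (y : ℂ)) = ((alphaPar ap am * (z * y) : ℝ) : ℂ) * I by
        push_cast; ring, Complex.norm_exp_ofReal_mul_I]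

lemma alg_aux (E F Q Y S P D : ℂ) (hF : F ≠ 0) :
    (E / F) * ((Q * Y / S) * (F * (P * D))) = Q * (Y * P) / S * (E * D) := by
  field_simp

lemma main_formula {ap am : ℝ} (hap : 0 < ap) (ham : 0 < am) (N : ℕ) : ∀ x y : Fin (N + 1) → ℝ,
    (∀ j k, j < k → x j ≠ x k) → (∀ j k, j < k → y j ≠ y k) →
    Jfree ap am (N + 1) x y = QQ (N + 1) * YY ap am (N + 1) y / (SS am (N + 1) x : ℂ) *
      ED ap am (N + 1) x y := by
  induction N with
  | zero =>
    intro x y _ _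
    simp [Jfree, QQ, YY, SS, ED, PP_succ, PP_zero, mul_assoc]
  | succ N ih =>
    intro x y hx hy
    have hSx : (SS am (N + 2) x : ℂ) ≠ 0 := by exact_mod_cast SS_ne_zero ham _ x hx
    set y' : Fin (N + 1) → ℝ := fun j => y j.castSucc - y (Fin.last (N + 1)) with hy'
    have hyd : ∀ j k, j < k → y' j ≠ y' k := by
      intro j k hjk h
      exact hy j.castSucc k.castSucc (by simpa using hjk) (by simpa [hy'] using h)
    have hy0 : ∀ j, y' j ≠ 0 := fun j => sub_ne_zero.mpr (hy _ _ (Fin.castSucc_lt_last j))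
    set f : Fin (N + 1) → ℝ → ℂ := fun j t =>
      ((Real.tanh (Real.pi * x j.castSucc / am - Real.pi * t / am) -
        Real.tanh (Real.pi * x (Fin.last (N + 1)) / am - Real.pi * t / am) : ℝ) : ℂ) with hf
    set g : Fin (N + 1) → ℝ → ℂ := fun k t =>
      cexp (I * (alphaPar ap am : ℂ) * ((t : ℂ) * (y' k : ℂ))) with hg
    set κ : ℂ := QQ (N + 2) * YY ap am (N + 1) y' / (SS am (N + 2) x : ℂ) with hκ
    have hpt : ∀ z, Kint ap am (N + 1) x y z =
        κ * ((Matrix.of fun j k => f j (z k)).det * (Matrix.of fun j k => g k (z j)).det) := by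
      intro z
      rw [Kint_eq, hf, ofReal_det, cauchy_SS]
      by_cases hz : SS am (N + 1) z = 0
      · rw [hz]; simp
      · have hz' : (SS am (N + 1) z : ℂ) ≠ 0 := by exact_mod_cast hz
        rw [ih z _ (ne_of_SS _ z hz) hyd, hκ, show QQ (N + 2) = (cc (N + 1) : ℂ) * QQ (N + 1) from (cc_QQ (N + 1)).symm]
        change _ = _ * (_ * ED ap am (N + 1) z y')
        push_cast
        field_simp
    obtain ⟨-, hA⟩ := andreief (N + 1) f g fun i j => fg_integrable ham _ _ _
    have hent : (fun j k => ∫ t, f j t * g k t) = fun j k : Fin (N + 1) => 1 *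
        ((-I * (am : ℂ) / (Real.sinh (Real.pi * y' k / ap) : ℂ)) *
        (cexp (I * (alphaPar ap am : ℂ) * ((x j.castSucc : ℂ) * (y' k : ℂ))) -
        cexp (I * (alphaPar ap am : ℂ) * ((x (Fin.last (N + 1)) : ℂ) * (y' k : ℂ))))) := by
      funext j k
      rw [one_mul]
      exact ft_scaled hap ham (hy0 k) _ _
    rw [Jfree_succ, integral_congr_ae (Filter.Eventually.of_forall hpt), integral_const_mul, hA, hent,
      det_scale (N + 1) (fun _ => 1), Finset.prod_const_one, one_mul, ED_succ, YY_succ, hκ]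
    have hfac : (Nat.factorial (N + 1) : ℂ) ≠ 0 := by exact_mod_cast Nat.factorial_ne_zero _
    exact alg_aux _ _ _ _ _ _ _ hfac

/-- In the free case `b = a₊` all the integrals in the recursive scheme converge
absolutely, and `J_N` is given by the explicit multivariate sine-transform kernel formula. -/
theorem statement7 (ap am : ℝ) (hap : 0 < ap) (ham : 0 < am) :
    (∀ (N : ℕ) (x y : Fin (N + 2) → ℝ),
      Integrable (fun z : Fin (N + 1) → ℝ =>
        (∏ q ∈ Finset.univ.filter (fun q : Fin (N + 1) × Fin (N + 1) => q.1 < q.2),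
          ((4 * Real.sinh (Real.pi * (z q.1 - z q.2) / am) ^ 2 : ℝ) : ℂ)) *
        (∏ j : Fin (N + 2), ∏ k : Fin (N + 1),
          ((1 / (2 * Real.cosh (Real.pi * (x j - z k) / am)) : ℝ) : ℂ)) *
        Jfree ap am (N + 1) z
          (fun j => y (Fin.castSucc j) - y (Fin.last (N + 1))))) ∧
    (∀ (N : ℕ), 1 ≤ N → ∀ x y : Fin N → ℝ,
      (∀ j k : Fin N, j < k → x j ≠ x k) → (∀ j k : Fin N, j < k → y j ≠ y k) →
      Jfree ap am N x y =
        (∏ q ∈ Finset.univ.filter (fun q : Fin N × Fin N => q.1 < q.2),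
          (-Complex.I * (am : ℂ)) /
            ((4 : ℂ) * (Real.sinh (Real.pi * (x q.1 - x q.2) / am) : ℂ) *
              (Real.sinh (Real.pi * (y q.1 - y q.2) / ap) : ℂ))) *
        ∑ σ : Equiv.Perm (Fin N), ((Equiv.Perm.sign σ : ℤ) : ℂ) *
          Complex.exp (Complex.I * (alphaPar ap am : ℂ) *
            ∑ j : Fin N, (x j : ℂ) * (y (σ j) : ℂ))) := by
  refine ⟨fun N x y => Kint_integrable ap ham N x y, ?_⟩
  intro N hN x y hx hy
  obtain ⟨M, rfl⟩ : ∃ M, N = M + 1 := ⟨N - 1, by omega⟩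
  rw [main_formula hap ham M x y hx hy]
  congr 1
  · change _ = PP (M + 1) (fun a b => (-Complex.I * (am : ℂ)) /
            ((4 : ℂ) * (Real.sinh (Real.pi * (x a - x b) / am) : ℂ) *
              (Real.sinh (Real.pi * (y a - y b) / ap) : ℂ)))
    rw [QQ, YY, SS, PP_ofReal, div_eq_mul_inv, ← PP_inv, ← PP_mul, ← PP_mul]
    congr 1
    funext a b
    rw [show Real.pi * x a / am - Real.pi * x b / am = Real.pi * (x a - x b) / am by ring]
    ring
  · rw [ED, ← Matrix.det_transpose, Matrix.det_apply']
    refine Finset.sum_congr rfl fun σ _ => ?_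
    rw [Finset.mul_sum, Complex.exp_sum]
    rfl
end

section
/- Fix y ∈ ℝ². Then there exists a unique function F, holomorphic on the open set D₂ = {(b,x) ∈ S_a × ℂ² : |Im(x₁−x₂)| < 2a − Re b}, such that F(b,x) = J₂(b;x,y) for all b ∈ S_a and all x ∈ ℝ². -/
open MeasureTheory Complex

/-- The function `g(a₊,a₋;z)` from the integral representation of the hyperbolic gamma
function. -/
noncomputable def ghyp (ap am : ℝ) (z : ℂ) : ℂ :=
  ∫ y in Set.Ioi (0 : ℝ),
    (1 / (y : ℂ)) *
      (Complex.sin (2 * (y : ℂ) * z) /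
          (2 * Complex.sinh ((ap : ℂ) * (y : ℂ)) * Complex.sinh ((am : ℂ) * (y : ℂ))) -
        z / ((ap : ℂ) * (am : ℂ) * (y : ℂ)))

/-- The hyperbolic gamma function `G(a₊,a₋;z) = exp(i g(a₊,a₋;z))`. -/
noncomputable def Ghyp (ap am : ℝ) (z : ℂ) : ℂ := Complex.exp (Complex.I * ghyp ap am z)

/-- The two-particle joint eigenfunction `J₂(b;x,y)` for real `x, y`. -/
noncomputable def J2 (ap am : ℝ) (b : ℂ) (x y : Fin 2 → ℝ) : ℂ :=
  Complex.exp (Complex.I * (alphaPar ap am : ℂ) * (y 1 : ℂ) * ((x 0 : ℂ) + (x 1 : ℂ))) *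
    ∫ z : ℝ, Complex.exp (Complex.I * (alphaPar ap am : ℂ) * (z : ℂ) * ((y 0 : ℂ) - (y 1 : ℂ))) *
      ∏ j : Fin 2,
        Ghyp ap am ((x j : ℂ) - (z : ℂ) - Complex.I * b / 2) /
          Ghyp ap am ((x j : ℂ) - (z : ℂ) + Complex.I * b / 2)

/-- The domain `D₂ = {(b,x) ∈ S_a × ℂ² : |Im(x₁−x₂)| < 2a − Re b}`. -/
def D2 (ap am : ℝ) : Set (ℂ × (Fin 2 → ℂ)) :=
  {p | (0 < p.1.re ∧ p.1.re < ap + am) ∧ |(p.2 0 - p.2 1).im| < ap + am - p.1.re}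

lemma holo_integral {E : Type*} [NormedAddCommGroup E] [NormedSpace ℂ E] [FiniteDimensional ℂ E]
    {μ : Measure ℝ} {f : E → ℝ → ℂ} {p0 : E} {r : ℝ} (hr : 0 < r) {B : ℝ → ℝ}
    (hB : Integrable B μ)
    (hm : ∀ p ∈ Metric.ball p0 r, AEStronglyMeasurable (f p) μ)
    (hd : ∀ᵐ y ∂μ, DifferentiableOn ℂ (f · y) (Metric.ball p0 r))
    (hb : ∀ᵐ y ∂μ, ∀ p ∈ Metric.ball p0 r, ‖f p y‖ ≤ B y) :
    DifferentiableAt ℂ (fun p => ∫ y, f p y ∂μ) p0 := by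
  have h0 : p0 ∈ Metric.ball p0 r := Metric.mem_ball_self hr
  have hdiff : ∀ᵐ y ∂μ, HasFDerivAt (f · y) (fderiv ℂ (f · y) p0) p0 := by
    filter_upwards [hd] with y hy
    exact (hy.differentiableAt (Metric.ball_mem_nhds p0 hr)).hasFDerivAt
  have happ : ∀ v : E, AEStronglyMeasurable (fun y => fderiv ℂ (f · y) p0 v) μ := by
    intro v
    obtain ⟨N, hN⟩ := exists_nat_gt (‖v‖ / r)
    have hNpos : (0 : ℝ) < N := lt_of_le_of_lt (by positivity) hN
    have hlim : ∀ᵐ y ∂μ, Filter.Tendsto (fun n : ℕ => ((n + N : ℕ) : ℂ) •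
        (f (p0 + ((n + N : ℕ) : ℂ)⁻¹ • v) y - f p0 y)) Filter.atTop
        (nhds (fderiv ℂ (f · y) p0 v)) := by
      filter_upwards [hdiff] with y hy
      refine hy.lim v ?_
      have : Filter.Tendsto (fun n : ℕ => ((n + N : ℕ) : ℝ)) Filter.atTop Filter.atTop :=
        tendsto_natCast_atTop_atTop.comp (Filter.tendsto_add_atTop_nat N)
      simpa only [Complex.norm_natCast] using this
    refine aestronglyMeasurable_of_tendsto_ae Filter.atTop (fun n => ?_) hlim
    refine AEStronglyMeasurable.const_smul (AEStronglyMeasurable.sub (hm (p0 + ((n + N : ℕ) : ℂ)⁻¹ • v) ?_) (hm p0 h0)) (((n + N : ℕ) : ℂ))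
    rw [mem_ball_iff_norm]
    simp only [add_sub_cancel_left, norm_smul, norm_inv, Complex.norm_natCast]
    have h1 : (N : ℝ) ≤ ((n + N : ℕ) : ℝ) := by push_cast; linarith [Nat.cast_nonneg (α := ℝ) n]
    rw [inv_mul_lt_iff₀ (by linarith)]
    rw [div_lt_iff₀ hr] at hN
    nlinarith
  have hmeas : AEStronglyMeasurable (fun y => fderiv ℂ (f · y) p0) μ := by
    let bs := Module.finBasis ℂ E
    have : (fun y => fderiv ℂ (f · y) p0) = fun y => ∑ i, (fderiv ℂ (f · y) p0 (bs i)) •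
        (LinearMap.toContinuousLinearMap (bs.coord i)) := by
      funext y
      refine ContinuousLinearMap.coe_injective (bs.ext fun j => ?_)
      simp [Finsupp.single_apply]
    rw [this]
    refine Finset.aestronglyMeasurable_fun_sum _ fun i _ => ?_
    exact (happ (bs i)).smul_const _
  refine (hasFDerivAt_integral_of_dominated_loc_of_lip' (bound := fun y => 2 * B y / r)
    (F' := fun y => fderiv ℂ (f · y) p0) (Metric.ball_mem_nhds p0 hr) hm ?_ hmeas ?_ ?_
    hdiff).2.differentiableAt
  · exact hB.mono' (hm _ h0) (hb.mono fun y hy => hy _ h0)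
  · filter_upwards [hd, hb] with y hy hby x hx
    have := Complex.dist_le_div_mul_dist_of_mapsTo_ball (R₂ := 2 * B y) hy (fun p hp => ?_) hx
    · rwa [dist_eq_norm, dist_eq_norm] at this
    · rw [mem_closedBall_iff_norm]
      refine (norm_sub_le _ _).trans ?_
      linarith [hby p hp, hby p0 h0]
  · exact (hB.const_mul 2).div_const r

noncomputable def hker (ap am : ℝ) (z : ℂ) (y : ℝ) : ℂ :=
    (1 / (y : ℂ)) *
      (Complex.sin (2 * (y : ℂ) * z) /
          (2 * Complex.sinh ((ap : ℂ) * (y : ℂ)) * Complex.sinh ((am : ℂ) * (y : ℂ))) -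
        z / ((ap : ℂ) * (am : ℂ) * (y : ℂ)))

lemma norm_sin_sub_le (w : ℂ) : ‖Complex.sin w - w‖ ≤ ‖w‖ ^ 3 * Real.exp ‖w‖ := by
  have h1 := Complex.norm_exp_sub_sum_le_norm_mul_exp (-w * I) 3
  have h2 := Complex.norm_exp_sub_sum_le_norm_mul_exp (w * I) 3
  have e : Complex.sin w - w = I / 2 * ((Complex.exp (-w * I) - ∑ m ∈ Finset.range 3, (-w * I) ^ m / (m.factorial : ℂ))
      - (Complex.exp (w * I) - ∑ m ∈ Finset.range 3, (w * I) ^ m / (m.factorial : ℂ))) := by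
    simp only [Complex.sin, Finset.sum_range_succ, Finset.sum_range_zero]
    simp
    ring_nf
    simp
  rw [e, norm_mul]
  simp only [norm_mul, norm_neg, norm_I, mul_one] at h1 h2
  have h3 : ‖I / 2‖ = 1 / 2 := by simp
  rw [h3]
  linarith [norm_sub_le (Complex.exp (-w * I) - ∑ m ∈ Finset.range 3, (-w * I) ^ m / (m.factorial : ℂ)) (Complex.exp (w * I) - ∑ m ∈ Finset.range 3, (w * I) ^ m / (m.factorial : ℂ))]

lemma norm_sin_le' (w : ℂ) : ‖Complex.sin w‖ ≤ Real.exp |w.im| := by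
  have e : Complex.sin w = I / 2 * (Complex.exp (-w * I) - Complex.exp (w * I)) := by
    simp only [Complex.sin]; ring
  have h1 : ‖Complex.exp (-w * I)‖ ≤ Real.exp |w.im| := by
    rw [Complex.norm_exp]; apply Real.exp_le_exp.2; simpa using le_abs_self w.im
  have h2 : ‖Complex.exp (w * I)‖ ≤ Real.exp |w.im| := by
    rw [Complex.norm_exp]; apply Real.exp_le_exp.2; simpa using neg_le_abs w.im
  rw [e, norm_mul]
  have h3 : ‖I / 2‖ = 1 / 2 := by simp
  rw [h3]
  linarith [norm_sub_le (Complex.exp (-w * I)) (Complex.exp (w * I))]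

lemma sinh_le_mul_exp {x : ℝ} (hx : 0 ≤ x) : Real.sinh x ≤ x * Real.exp (x ^ 2 / 2) := by
  have h : Real.sinh x ≤ x * Real.cosh x := by
    have hm : MonotoneOn (fun x => x * Real.cosh x - Real.sinh x) (Set.Ici 0) := by
      apply monotoneOn_of_deriv_nonneg (convex_Ici 0) (by fun_prop) (by fun_prop)
      intro y hy
      rw [interior_Ici] at hy
      have : HasDerivAt (fun x => x * Real.cosh x - Real.sinh x)
          (1 * Real.cosh y + y * Real.sinh y - Real.cosh y) y :=
        ((hasDerivAt_id y).mul (Real.hasDerivAt_cosh y)).sub (Real.hasDerivAt_sinh y)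
      rw [this.deriv]
      have := mul_nonneg (le_of_lt hy) (Real.sinh_nonneg_iff.2 (le_of_lt hy))
      linarith
    have := hm (Set.mem_Ici.2 le_rfl) hx hx
    simp at this
    linarith
  exact h.trans (mul_le_mul_of_nonneg_left (Real.cosh_le_exp_half_sq x) hx)

lemma sinh_ge_exp {c y : ℝ} (hc : 0 < c) (hy : 1 ≤ y) :
    (1 - Real.exp (-2 * c)) / 2 * Real.exp (c * y) ≤ Real.sinh (c * y) := by
  rw [Real.sinh_eq]
  have : Real.exp (-(c * y)) ≤ Real.exp (-2 * c) * Real.exp (c * y) := by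
    rw [← Real.exp_add]; apply Real.exp_le_exp.2; nlinarith
  linarith

lemma inv_sub_bound {ap am y : ℝ} (hap : 0 < ap) (ham : 0 < am) (hy : 0 < y) :
    |1 / (Real.sinh (ap * y) * Real.sinh (am * y)) - 1 / (ap * am * y ^ 2)|
      ≤ (ap ^ 2 + am ^ 2) / 2 / (ap * am) := by
  have p1 : 0 < ap * y := by positivity
  have p2 : 0 < am * y := by positivity
  have l1 := Real.self_le_sinh_iff.2 p1.le
  have l2 := Real.self_le_sinh_iff.2 p2.le
  have u1 := sinh_le_mul_exp p1.le
  have u2 := sinh_le_mul_exp p2.le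
  have s1 : 0 < Real.sinh (ap * y) := by linarith
  have s2 : 0 < Real.sinh (am * y) := by linarith
  set S := Real.sinh (ap * y) * Real.sinh (am * y) with hS
  have hS0 : 0 < S := by positivity
  have hl : ap * am * y ^ 2 ≤ S := by
    calc ap * am * y ^ 2 = (ap * y) * (am * y) := by ring
      _ ≤ S := mul_le_mul l1 l2 p2.le s1.le
  have hu : S ≤ ap * am * y ^ 2 * Real.exp ((ap ^ 2 + am ^ 2) / 2 * y ^ 2) := by
    calc S ≤ (ap * y * Real.exp ((ap * y) ^ 2 / 2)) * (am * y * Real.exp ((am * y) ^ 2 / 2)) :=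
          mul_le_mul u1 u2 s2.le (by positivity)
      _ = ap * am * y ^ 2 * (Real.exp ((ap * y) ^ 2 / 2) * Real.exp ((am * y) ^ 2 / 2)) := by ring
      _ = _ := by rw [← Real.exp_add]; ring_nf
  have hA : 0 < ap * am * y ^ 2 := by positivity
  have h1 : 1 / S ≤ 1 / (ap * am * y ^ 2) := one_div_le_one_div_of_le hA hl
  rw [abs_sub_comm, abs_of_nonneg (by linarith)]
  have h2 : Real.exp (-((ap ^ 2 + am ^ 2) / 2 * y ^ 2)) / (ap * am * y ^ 2) ≤ 1 / S := by
    rw [Real.exp_neg, div_le_div_iff₀ hA hS0, one_mul, inv_mul_le_iff₀ (Real.exp_pos _)]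
    linarith
  have h3 := Real.add_one_le_exp (-((ap ^ 2 + am ^ 2) / 2 * y ^ 2))
  have h4 : (1 - ((ap ^ 2 + am ^ 2) / 2 * y ^ 2)) / (ap * am * y ^ 2) ≤ 1 / S := by
    refine le_trans ?_ h2
    gcongr; linarith
  have h5 : (1 - ((ap ^ 2 + am ^ 2) / 2 * y ^ 2)) / (ap * am * y ^ 2) =
     1 / (ap * am * y ^ 2) - (ap ^ 2 + am ^ 2) / 2 / (ap * am) := by
    field_simp
  linarith

lemma exp_neg_le {δ y : ℝ} (hδ0 : 0 < δ) (hy : 0 ≤ y) :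
    Real.exp (-(δ * y)) ≤ (1 + 2 / δ ^ 2) * (1 + y ^ 2)⁻¹ := by
  rw [← div_eq_mul_inv, le_div_iff₀ (by positivity), Real.exp_neg,
    inv_mul_le_iff₀ (Real.exp_pos _)]
  have := Real.quadratic_le_exp_of_nonneg (x := δ * y) (by positivity)
  have h2 : 1 + (δ * y) ^ 2 / 2 ≤ Real.exp (δ * y) := by linarith [mul_nonneg hδ0.le hy]
  calc 1 + y ^ 2 ≤ (1 + (δ * y) ^ 2 / 2) * (1 + 2 / δ ^ 2) := by
        have : (1 + (δ * y) ^ 2 / 2) * (1 + 2 / δ ^ 2) =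
          1 + y ^ 2 + ((δ * y) ^ 2 / 2 + 2 / δ ^ 2) := by field_simp; ring
        rw [this]; linarith [show 0 ≤ ((δ * y) ^ 2 / 2 + 2 / δ ^ 2) by positivity]
    _ ≤ _ := by gcongr

lemma hker_bound {ap am : ℝ} (hap : 0 < ap) (ham : 0 < am) {R τ : ℝ} (hR : 0 ≤ R)
    (hτ : 2 * τ < ap + am) : ∃ C : ℝ, 0 ≤ C ∧ ∀ z : ℂ, ‖z‖ ≤ R → |z.im| ≤ τ → ∀ y : ℝ, 0 < y →
      ‖hker ap am z y‖ ≤ C * (1 + y ^ 2)⁻¹ := by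
  set K := (ap ^ 2 + am ^ 2) / 2 / (ap * am) with hK
  have hK0 : 0 ≤ K := by positivity
  set C1 := 4 * R ^ 3 * Real.exp (2 * R) / (ap * am) + R * K with hC1
  set k := (1 - Real.exp (-2 * ap)) / 2 * ((1 - Real.exp (-2 * am)) / 2) with hk
  have hk0 : 0 < k := by
    have : Real.exp (-2 * ap) < 1 := Real.exp_lt_one_iff.mpr (by linarith)
    have : Real.exp (-2 * am) < 1 := Real.exp_lt_one_iff.mpr (by linarith)
    apply mul_pos <;> linarith
  set δ := ap + am - 2 * τ with hδ
  have hδ0 : 0 < δ := by linarith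
  have hC10 : 0 ≤ C1 := by positivity
  refine ⟨2 * C1 + 1 / (2 * k) * (1 + 2 / δ ^ 2) + 2 * (R / (ap * am)), by positivity, ?_⟩
  intro z hz hzi y hy
  have p1 : 0 < ap * y := by positivity
  have p2 : 0 < am * y := by positivity
  have l1 := Real.self_le_sinh_iff.2 p1.le
  have l2 := Real.self_le_sinh_iff.2 p2.le
  have s1 : 0 < Real.sinh (ap * y) := by linarith
  have s2 : 0 < Real.sinh (am * y) := by linarith
  have hl : ap * am * y ^ 2 ≤ Real.sinh (ap * y) * Real.sinh (am * y) := by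
    calc ap * am * y ^ 2 = (ap * y) * (am * y) := by ring
      _ ≤ _ := mul_le_mul l1 l2 p2.le s1.le
  have hden : 2 * Complex.sinh ((ap : ℂ) * (y : ℂ)) * Complex.sinh ((am : ℂ) * (y : ℂ)) =
      ((2 * (Real.sinh (ap * y) * Real.sinh (am * y)) : ℝ) : ℂ) := by push_cast; ring
  have hS0 : 0 < Real.sinh (ap * y) * Real.sinh (am * y) := by positivity
  have hib := inv_sub_bound hap ham hy
  rw [← hK] at hib
  have hwn : ‖2 * (y : ℂ) * z‖ = 2 * y * ‖z‖ := by
    simp [abs_of_pos hy]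
  unfold hker
  rw [hden]
  rcases le_total y 1 with h1 | h1
  · set S := Real.sinh (ap * y) * Real.sinh (am * y) with hS
    have e : (1 / (y : ℂ)) * (Complex.sin (2 * (y : ℂ) * z) / ((2 * S : ℝ) : ℂ) -
        z / ((ap : ℂ) * (am : ℂ) * (y : ℂ))) =
        (Complex.sin (2 * (y : ℂ) * z) - 2 * (y : ℂ) * z) / ((2 * S * y : ℝ) : ℂ) +
        z * ((1 / S - 1 / (ap * am * y ^ 2) : ℝ) : ℂ) := by
      have a1 : (S : ℂ) ≠ 0 := by exact_mod_cast hS0.ne'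
      have a2 : (y : ℂ) ≠ 0 := by exact_mod_cast hy.ne'
      have a3 : (ap : ℂ) ≠ 0 := by exact_mod_cast hap.ne'
      have a4 : (am : ℂ) ≠ 0 := by exact_mod_cast ham.ne'
      push_cast
      field_simp
      ring
    rw [e]
    have b1 : ‖(Complex.sin (2 * (y : ℂ) * z) - 2 * (y : ℂ) * z) / ((2 * S * y : ℝ) : ℂ)‖ ≤
        4 * R ^ 3 * Real.exp (2 * R) / (ap * am) := by
      rw [norm_div, Complex.norm_real, Real.norm_of_nonneg (by positivity)]
      have h2 := norm_sin_sub_le (2 * (y : ℂ) * z)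
      rw [hwn] at h2
      have h3 : (2 * y * ‖z‖) ^ 3 * Real.exp (2 * y * ‖z‖) ≤ (2 * y * R) ^ 3 * Real.exp (2 * R) := by
        have : 2 * y * ‖z‖ ≤ 2 * R := by nlinarith [norm_nonneg z]
        gcongr
      calc _ ≤ ((2 * y * R) ^ 3 * Real.exp (2 * R)) / (2 * (ap * am * y ^ 2) * y) := by
            gcongr; exact h2.trans h3
        _ = _ := by field_simp; ring
    have b2 : ‖z * ((1 / S - 1 / (ap * am * y ^ 2) : ℝ) : ℂ)‖ ≤ R * K := by
      rw [norm_mul, Complex.norm_real, Real.norm_eq_abs]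
      gcongr
    have b3 : ‖(Complex.sin (2 * (y : ℂ) * z) - 2 * (y : ℂ) * z) / ((2 * S * y : ℝ) : ℂ) +
        z * ((1 / S - 1 / (ap * am * y ^ 2) : ℝ) : ℂ)‖ ≤ C1 :=
      (norm_add_le _ _).trans (add_le_add b1 b2)
    refine b3.trans ?_
    rw [← div_eq_mul_inv, le_div_iff₀ (by positivity)]
    have : 0 ≤ 1 / (2 * k) * (1 + 2 / δ ^ 2) := by positivity
    have : 0 ≤ 2 * (R / (ap * am)) := by positivity
    have hy2 : y ^ 2 ≤ 1 := by nlinarith only [hy, h1]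
    have := mul_le_mul_of_nonneg_left hy2 hC10
    linarith
  · have hg1 := sinh_ge_exp hap h1
    have hg2 := sinh_ge_exp ham h1
    have hg : k * Real.exp ((ap + am) * y) ≤ Real.sinh (ap * y) * Real.sinh (am * y) := by
      have e1 : Real.exp (-2 * am) < 1 := Real.exp_lt_one_iff.mpr (by linarith)
      have := mul_le_mul hg1 hg2 (mul_nonneg (by linarith) (Real.exp_pos _).le) s1.le
      rw [add_mul, Real.exp_add]
      calc _ = _ := by rw [hk]; ring
        _ ≤ _ := this
    set S := Real.sinh (ap * y) * Real.sinh (am * y) with hS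
    have hexp := exp_neg_le hδ0 hy.le
    have b1 : ‖Complex.sin (2 * (y : ℂ) * z) / ((2 * S : ℝ) : ℂ)‖ ≤
        1 / (2 * k) * Real.exp (-(δ * y)) := by
      rw [norm_div, Complex.norm_real, Real.norm_of_nonneg (by positivity)]
      have h2 := norm_sin_le' (2 * (y : ℂ) * z)
      have h3 : |(2 * (y : ℂ) * z).im| ≤ 2 * y * τ := by
        have : (2 * (y : ℂ) * z).im = 2 * y * z.im := by simp
        rw [this, abs_mul, abs_of_pos (by positivity : 0 < 2 * y)]
        gcongr
      have h4 : Real.exp (-(δ * y)) = Real.exp (2 * y * τ) / Real.exp ((ap + am) * y) := by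
        rw [← Real.exp_sub]; congr 1; rw [hδ]; ring
      rw [h4]
      calc _ ≤ Real.exp (2 * y * τ) / (2 * (k * Real.exp ((ap + am) * y))) := by
            gcongr; exact h2.trans (Real.exp_le_exp.2 h3)
        _ = _ := by field_simp
    have b2 : ‖z / ((ap : ℂ) * (am : ℂ) * (y : ℂ))‖ ≤ R / (ap * am) * (1 / y) := by
      rw [norm_div]
      simp only [norm_mul, Complex.norm_real, Real.norm_of_nonneg hap.le, Real.norm_of_nonneg ham.le, Real.norm_of_nonneg hy.le]
      rw [div_mul_div_comm, mul_one]
      gcongr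
    have b3 : 1 / y * (1 / y) ≤ 2 * (1 + y ^ 2)⁻¹ := by
      rw [← div_eq_mul_inv, div_mul_div_comm, div_le_div_iff₀ (by positivity) (by positivity)]
      nlinarith only [h1]
    have b4 : 1 / y ≤ 1 := by rw [div_le_one hy]; exact h1
    have b5 : ‖(1 / (y : ℂ))‖ = 1 / y := by simp [abs_of_pos hy]
    rw [norm_mul, b5]
    calc _ ≤ 1 / y * (1 / (2 * k) * Real.exp (-(δ * y)) + R / (ap * am) * (1 / y)) := by
          gcongr; exact (norm_sub_le _ _).trans (add_le_add b1 b2)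
      _ = 1 / y * (1 / (2 * k) * Real.exp (-(δ * y))) + R / (ap * am) * (1 / y * (1 / y)) := by ring
      _ ≤ 1 * (1 / (2 * k) * ((1 + 2 / δ ^ 2) * (1 + y ^ 2)⁻¹)) + R / (ap * am) * (2 * (1 + y ^ 2)⁻¹) := by
          gcongr
      _ ≤ 2 * C1 * (1 + y ^ 2)⁻¹ + (1 * (1 / (2 * k) * ((1 + 2 / δ ^ 2) * (1 + y ^ 2)⁻¹)) + R / (ap * am) * (2 * (1 + y ^ 2)⁻¹)) := by
          have : 0 ≤ 2 * C1 * (1 + y ^ 2)⁻¹ := by positivity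
          linarith
      _ = _ := by ring

lemma hker_meas (ap am : ℝ) (z : ℂ) (μ : Measure ℝ) :
    AEStronglyMeasurable (hker ap am z) μ := by
  apply Measurable.aestronglyMeasurable
  unfold hker
  fun_prop

lemma hker_integrable {ap am : ℝ} (hap : 0 < ap) (ham : 0 < am) {z : ℂ}
    (hz : 2 * |z.im| < ap + am) : IntegrableOn (hker ap am z) (Set.Ioi 0) := by
  obtain ⟨C, -, hC⟩ := hker_bound hap ham (norm_nonneg z) hz
  refine Integrable.mono' (integrable_inv_one_add_sq.integrableOn.const_mul C)
    (hker_meas ap am z _) ?_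
  filter_upwards [ae_restrict_mem measurableSet_Ioi] with y hy
  exact hC z le_rfl le_rfl y hy

lemma ghyp_differentiableAt {ap am : ℝ} (hap : 0 < ap) (ham : 0 < am) {z : ℂ}
    (hz : 2 * |z.im| < ap + am) : DifferentiableAt ℂ (ghyp ap am) z := by
  set r := (ap + am - 2 * |z.im|) / 4 with hr
  have hr0 : 0 < r := by rw [hr]; linarith
  obtain ⟨C, -, hC⟩ := hker_bound hap ham (R := ‖z‖ + r) (τ := |z.im| + r) (by positivity)
    (by rw [hr]; linarith)
  have := holo_integral (μ := volume.restrict (Set.Ioi (0 : ℝ))) (f := hker ap am) (p0 := z) hr0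
    (B := fun y => C * (1 + y ^ 2)⁻¹) (integrable_inv_one_add_sq.integrableOn.const_mul C)
    (fun p _ => hker_meas ap am p _)
    (Filter.Eventually.of_forall fun y => by
      apply Differentiable.differentiableOn
      unfold hker
      have h1 : ∀ c d : ℂ, Differentiable ℂ (fun z : ℂ => Complex.sin (c * z) / d) := by
        intro c d
        exact (Complex.differentiable_sin.comp (differentiable_id.const_mul c)).div_const d
      exact ((h1 _ _).sub (differentiable_id.div_const _)).const_mul _) ?_
  · exact this
  · filter_upwards [ae_restrict_mem measurableSet_Ioi] with y hy p hp
    rw [mem_ball_iff_norm] at hp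
    refine hC p ?_ ?_ y hy
    · have := norm_add_le (p - z) z
      rw [sub_add_cancel] at this
      linarith
    · have h1 := Complex.abs_im_le_norm (p - z)
      have h2 := abs_add_le (p - z).im z.im
      rw [Complex.sub_im, sub_add_cancel] at h2
      rw [Complex.sub_im] at h1
      linarith

noncomputable def qker (x : ℝ) : ℝ := (1 - Real.cos (2 * x)) / x ^ 2

lemma qker_nonneg (x : ℝ) : 0 ≤ qker x :=
  div_nonneg (by linarith [Real.cos_le_one (2 * x)]) (sq_nonneg _)

lemma qker_le (x : ℝ) (hx : 0 < x) : qker x ≤ 4 * (1 + x ^ 2)⁻¹ := by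
  unfold qker
  rw [← div_eq_mul_inv, div_le_div_iff₀ (by positivity) (by positivity)]
  have h1 := Real.one_sub_sq_div_two_le_cos (x := 2 * x)
  have h2 := Real.neg_one_le_cos (2 * x)
  nlinarith [sq_nonneg x]

lemma qker_integrable : IntegrableOn qker (Set.Ioi 0) := by
  refine Integrable.mono' (integrable_inv_one_add_sq.integrableOn.const_mul 4) ?_ ?_
  · apply Measurable.aestronglyMeasurable
    unfold qker; fun_prop
  · filter_upwards [ae_restrict_mem measurableSet_Ioi] with y hy
    rw [Real.norm_of_nonneg (qker_nonneg y)]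
    exact qker_le y hy

lemma qker_pos : 0 < ∫ x in Set.Ioi (0 : ℝ), qker x := by
  rw [setIntegral_pos_iff_support_of_nonneg_ae (Filter.Eventually.of_forall qker_nonneg)
    qker_integrable]
  have : Set.Ioo (0 : ℝ) 1 ⊆ Function.support qker ∩ Set.Ioi 0 := by
    intro x hx
    refine ⟨?_, hx.1⟩
    rw [Function.mem_support]
    apply ne_of_gt
    apply div_pos _ (pow_pos hx.1 2)
    have : Real.cos (2 * x) < Real.cos 0 :=
      Real.cos_lt_cos_of_nonneg_of_le_pi le_rfl (by linarith [hx.2, Real.pi_gt_three])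
        (by linarith [hx.1])
    rw [Real.cos_zero] at this
    linarith
  refine lt_of_lt_of_le ?_ (measure_mono this)
  simp

lemma qker_scale (s : ℝ) : ∫ y in Set.Ioi (0 : ℝ), (1 - Real.cos (2 * y * s)) / y ^ 2 =
    |s| * ∫ x in Set.Ioi (0 : ℝ), qker x := by
  rcases eq_or_ne s 0 with rfl | hs
  · simp
  have hs' : 0 < |s| := abs_pos.2 hs
  have e : ∀ y : ℝ, (1 - Real.cos (2 * y * s)) / y ^ 2 = s ^ 2 * qker (|s| * y) := by
    intro y
    unfold qker
    have h1 : Real.cos (2 * (|s| * y)) = Real.cos (2 * y * s) := by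
      rcases abs_cases s with ⟨h, _⟩ | ⟨h, _⟩ <;> rw [h]
      · ring_nf
      · rw [← Real.cos_neg]; ring_nf
    rw [h1, mul_pow, sq_abs]
    field_simp
  simp_rw [e]
  rw [integral_const_mul, integral_comp_mul_left_Ioi _ _ hs', mul_zero, smul_eq_mul,
    ← mul_assoc, ← sq_abs s]
  field_simp

lemma qker_scale_int (s : ℝ) :
    IntegrableOn (fun y : ℝ => (1 - Real.cos (2 * y * s)) / y ^ 2) (Set.Ioi 0) := by
  refine Integrable.mono' (integrable_inv_one_add_sq.integrableOn.const_mul (4 + 4 * s ^ 2)) ?_ ?_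
  · apply Measurable.aestronglyMeasurable
    fun_prop
  · filter_upwards [ae_restrict_mem measurableSet_Ioi] with x hx
    have hx : 0 < x := hx
    rw [Real.norm_of_nonneg (div_nonneg (by linarith [Real.cos_le_one (2 * x * s)]) (sq_nonneg _))]
    rw [← div_eq_mul_inv, div_le_div_iff₀ (by positivity) (by positivity)]
    have h1 := Real.one_sub_sq_div_two_le_cos (x := 2 * x * s)
    have h2 := Real.neg_one_le_cos (2 * x * s)
    nlinarith [sq_nonneg x, sq_nonneg (x * s)]

lemma hker_im {ap am : ℝ} (hap : 0 < ap) (ham : 0 < am) (z : ℂ) {y : ℝ} (hy : 0 < y) :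
    (hker ap am z y).im = Real.cos (2 * y * z.re) * (hker ap am (z.im * I) y).im -
      z.im / (ap * am) * ((1 - Real.cos (2 * y * z.re)) / y ^ 2) := by
  have key : ∀ w : ℂ, (hker ap am w y).im = (1 / y) * ((Real.cos (2 * y * w.re) * Real.sinh (2 * y * w.im)) /
      (2 * Real.sinh (ap * y) * Real.sinh (am * y)) - w.im / (ap * am * y)) := by
    intro w
    have hs : (Complex.sin (2 * (y : ℂ) * w)).im = Real.cos (2 * y * w.re) * Real.sinh (2 * y * w.im) := by
      have : 2 * (y : ℂ) * w = ((2 * y * w.re : ℝ) : ℂ) + ((2 * y * w.im : ℝ) : ℂ) * I := by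
        conv_lhs => rw [← Complex.re_add_im w]
        push_cast; ring
      rw [this, Complex.sin_add_mul_I, ← Complex.ofReal_sin, ← Complex.ofReal_cos,
        ← Complex.ofReal_cosh, ← Complex.ofReal_sinh, ← Complex.ofReal_mul, ← Complex.ofReal_mul,
        Complex.add_im, Complex.ofReal_im, zero_add, Complex.im_ofReal_mul, Complex.I_im, mul_one]
    have e : hker ap am w y = ((1 / y : ℝ) : ℂ) * (Complex.sin (2 * (y : ℂ) * w) /
      ((2 * Real.sinh (ap * y) * Real.sinh (am * y) : ℝ) : ℂ) - w / ((ap * am * y : ℝ) : ℂ)) := by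
      unfold hker; push_cast; rfl
    rw [e, Complex.im_ofReal_mul, Complex.sub_im, Complex.div_ofReal_im, Complex.div_ofReal_im, hs]
  rw [key, key]
  have s1 : Real.sinh (ap * y) ≠ 0 := (Real.sinh_pos_iff.2 (by positivity)).ne'
  have s2 : Real.sinh (am * y) ≠ 0 := (Real.sinh_pos_iff.2 (by positivity)).ne'
  simp
  field_simp
  ring

lemma ghyp_im_bound {ap am : ℝ} (hap : 0 < ap) (ham : 0 < am) : ∃ κ : ℝ, 0 < κ ∧
    ∀ τ : ℝ, 2 * τ < ap + am → ∃ M : ℝ, ∀ z : ℂ, |z.im| ≤ τ →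
      |(ghyp ap am z).im + κ * (z.im * |z.re|)| ≤ M := by
  refine ⟨(∫ x in Set.Ioi (0 : ℝ), qker x) / (ap * am), div_pos qker_pos (by positivity), ?_⟩
  intro τ hτ
  obtain ⟨C, hC0, hC⟩ := hker_bound hap ham (abs_nonneg τ) hτ
  refine ⟨∫ y in Set.Ioi (0 : ℝ), C * (1 + y ^ 2)⁻¹, ?_⟩
  intro z hz
  have hz2 : 2 * |z.im| < ap + am := by linarith
  have e1 : (ghyp ap am z).im = ∫ y in Set.Ioi (0 : ℝ), (hker ap am z y).im := by
    exact (integral_im (hker_integrable hap ham hz2)).symm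
  have hb : ∀ y ∈ Set.Ioi (0 : ℝ),
      ‖Real.cos (2 * y * z.re) * (hker ap am (z.im * I) y).im‖ ≤ C * (1 + y ^ 2)⁻¹ := by
    intro y hy
    rw [norm_mul]
    have h1 : ‖Real.cos (2 * y * z.re)‖ ≤ 1 := Real.abs_cos_le_one _
    have h2 : ‖(hker ap am (z.im * I) y).im‖ ≤ C * (1 + y ^ 2)⁻¹ :=
      (Complex.abs_im_le_norm _).trans (hC _ (by simpa using hz.trans (le_abs_self τ)) (by simpa using hz) y hy)
    calc _ ≤ 1 * (C * (1 + y ^ 2)⁻¹) := by gcongr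
      _ = _ := one_mul _
  have hBi : IntegrableOn (fun y : ℝ => C * (1 + y ^ 2)⁻¹) (Set.Ioi 0) :=
    integrable_inv_one_add_sq.integrableOn.const_mul C
  have hi : IntegrableOn (fun y : ℝ => Real.cos (2 * y * z.re) * (hker ap am (z.im * I) y).im)
      (Set.Ioi 0) := by
    refine Integrable.mono' hBi ?_ ?_
    · apply Measurable.aestronglyMeasurable
      unfold hker
      fun_prop
    · filter_upwards [ae_restrict_mem measurableSet_Ioi] with y hy using hb y hy
  have e2 : (ghyp ap am z).im = (∫ y in Set.Ioi (0 : ℝ),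
      Real.cos (2 * y * z.re) * (hker ap am (z.im * I) y).im) -
      z.im / (ap * am) * (|z.re| * ∫ x in Set.Ioi (0 : ℝ), qker x) := by
    rw [e1, setIntegral_congr_fun measurableSet_Ioi (fun y hy => hker_im hap ham z hy),
      integral_sub hi ((qker_scale_int z.re).const_mul _), integral_const_mul, qker_scale]
  have e3 : (ghyp ap am z).im + (∫ x in Set.Ioi (0 : ℝ), qker x) / (ap * am) * (z.im * |z.re|) =
      ∫ y in Set.Ioi (0 : ℝ), Real.cos (2 * y * z.re) * (hker ap am (z.im * I) y).im := by
    rw [e2]; ring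
  rw [e3, ← Real.norm_eq_abs]
  refine norm_integral_le_of_norm_le hBi ?_
  filter_upwards [ae_restrict_mem measurableSet_Ioi] with y hy using hb y hy

lemma norm_Ghyp (ap am : ℝ) (z : ℂ) : ‖Ghyp ap am z‖ = Real.exp (-(ghyp ap am z).im) := by
  rw [Ghyp, Complex.norm_exp]; simp

lemma Ghyp_ne_zero (ap am : ℝ) (z : ℂ) : Ghyp ap am z ≠ 0 := Complex.exp_ne_zero _

lemma Ghyp_differentiableAt {ap am : ℝ} (hap : 0 < ap) (ham : 0 < am) {z : ℂ}
    (hz : 2 * |z.im| < ap + am) : DifferentiableAt ℂ (Ghyp ap am) z :=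
  ((ghyp_differentiableAt hap ham hz).const_mul I).cexp

noncomputable def Wq (ap am : ℝ) (b w : ℂ) : ℂ :=
  Ghyp ap am (w - I * b / 2) / Ghyp ap am (w + I * b / 2)

lemma Wq_bound {ap am : ℝ} (hap : 0 < ap) (ham : 0 < am) : ∃ κ : ℝ, 0 < κ ∧
    ∀ τ Γ : ℝ, 2 * τ < ap + am → ∃ M : ℝ, ∀ b w : ℂ, 0 < b.re → |w.im| + b.re / 2 ≤ τ →
      |b.im| ≤ Γ → ‖Wq ap am b w‖ ≤ Real.exp (M - κ * (b.re * |w.re|)) := by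
  obtain ⟨κ, hκ, h⟩ := ghyp_im_bound hap ham
  refine ⟨κ, hκ, fun τ Γ hτ => ?_⟩
  obtain ⟨M, hM⟩ := h τ hτ
  refine ⟨2 * M + κ * (τ * Γ), fun b w hb hw hbi => ?_⟩
  have i1 : (w - I * b / 2).im = w.im - b.re / 2 := by simp
  have i2 : (w + I * b / 2).im = w.im + b.re / 2 := by simp
  have r1 : (w - I * b / 2).re = w.re + b.im / 2 := by simp; ring
  have r2 : (w + I * b / 2).re = w.re - b.im / 2 := by simp; ring
  have a1 := abs_le.1 (le_refl |w.im|)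
  have h1 := hM (w - I * b / 2) (by rw [i1, abs_le]; constructor <;> linarith)
  have h2 := hM (w + I * b / 2) (by rw [i2, abs_le]; constructor <;> linarith)
  rw [i1, r1] at h1
  rw [i2, r2] at h2
  rw [Wq, norm_div, norm_Ghyp, norm_Ghyp, ← Real.exp_sub]
  apply Real.exp_le_exp.2
  have h1' := (abs_le.1 h1).1
  have h2' := (abs_le.1 h2).2
  have t1 : |w.re + b.im / 2| - |w.re - b.im / 2| ≤ |b.im| := by
    have := abs_sub_abs_le_abs_sub (w.re + b.im / 2) (w.re - b.im / 2)
    have e : w.re + b.im / 2 - (w.re - b.im / 2) = b.im := by ring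
    rwa [e] at this
  have t1' : -|b.im| ≤ |w.re + b.im / 2| - |w.re - b.im / 2| := by
    have := abs_sub_abs_le_abs_sub (w.re - b.im / 2) (w.re + b.im / 2)
    have e : w.re - b.im / 2 - (w.re + b.im / 2) = -b.im := by ring
    rw [e, abs_neg] at this
    linarith
  have t2 : 2 * |w.re| ≤ |w.re + b.im / 2| + |w.re - b.im / 2| := by
    have := abs_add_le (w.re + b.im / 2) (w.re - b.im / 2)
    have e : w.re + b.im / 2 + (w.re - b.im / 2) = 2 * w.re := by ring
    rwa [e, abs_mul, abs_two] at this
  have t3 : w.im * (|w.re + b.im / 2| - |w.re - b.im / 2|) ≤ τ * Γ := by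
    have hx : |(|w.re + b.im / 2| - |w.re - b.im / 2|)| ≤ Γ := (abs_le.2 ⟨t1', t1⟩).trans hbi
    calc _ ≤ |w.im * (|w.re + b.im / 2| - |w.re - b.im / 2|)| := le_abs_self _
      _ = |w.im| * |(|w.re + b.im / 2| - |w.re - b.im / 2|)| := abs_mul _ _
      _ ≤ τ * Γ := mul_le_mul (by linarith) hx (abs_nonneg _) (by linarith [abs_nonneg w.im])
  have t4 : (w.im - b.re / 2) * |w.re + b.im / 2| - (w.im + b.re / 2) * |w.re - b.im / 2| ≤
      τ * Γ - b.re * |w.re| := by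
    have := mul_le_mul_of_nonneg_left t2 hb.le
    linarith
  have t5 := mul_le_mul_of_nonneg_left t4 hκ.le
  linarith

noncomputable def Hker (ap am c : ℝ) (p : ℂ × ℂ) (z : ℝ) : ℂ :=
  Complex.exp (I * (z : ℂ) * (c : ℂ)) * (Wq ap am p.1 (p.2 - z) * Wq ap am p.1 (-p.2 - z))

lemma Wq_differentiableAt {ap am : ℝ} (hap : 0 < ap) (ham : 0 < am) {E : Type*}
    [NormedAddCommGroup E] [NormedSpace ℂ E] {β ω : E → ℂ} {e : E}
    (hβ : DifferentiableAt ℂ β e) (hω : DifferentiableAt ℂ ω e) (hb : 0 < (β e).re)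
    (h : |(ω e).im| + (β e).re / 2 < (ap + am) / 2) :
    DifferentiableAt ℂ (fun e => Wq ap am (β e) (ω e)) e := by
  unfold Wq
  have a1 := abs_le.1 (le_refl |(ω e).im|)
  have i1 : (ω e - I * β e / 2).im = (ω e).im - (β e).re / 2 := by simp
  have i2 : (ω e + I * β e / 2).im = (ω e).im + (β e).re / 2 := by simp
  have d1 : DifferentiableAt ℂ (Ghyp ap am) (ω e - I * β e / 2) := by
    apply Ghyp_differentiableAt hap ham
    rw [i1]
    have : |(ω e).im - (β e).re / 2| < (ap + am) / 2 := by rw [abs_lt]; constructor <;> linarith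
    linarith
  have d2 : DifferentiableAt ℂ (Ghyp ap am) (ω e + I * β e / 2) := by
    apply Ghyp_differentiableAt hap ham
    rw [i2]
    have : |(ω e).im + (β e).re / 2| < (ap + am) / 2 := by rw [abs_lt]; constructor <;> linarith
    linarith
  have c1 : DifferentiableAt ℂ (fun e => ω e - I * β e / 2) e := by fun_prop
  have c2 : DifferentiableAt ℂ (fun e => ω e + I * β e / 2) e := by fun_prop
  have f1 : DifferentiableAt ℂ (fun e => Ghyp ap am (ω e - I * β e / 2)) e :=
    DifferentiableAt.comp (g := Ghyp ap am) e d1 c1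
  have f2 : DifferentiableAt ℂ (fun e => Ghyp ap am (ω e + I * β e / 2)) e :=
    DifferentiableAt.comp (g := Ghyp ap am) e d2 c2
  simp_rw [div_eq_mul_inv (Ghyp ap am _)]
  exact f1.mul (DifferentiableAt.fun_inv f2 (Ghyp_ne_zero _ _ _))

lemma Wq_continuous {ap am : ℝ} (hap : 0 < ap) (ham : 0 < am) {b u : ℂ} (hb : 0 < b.re)
    (h : |u.im| + b.re / 2 < (ap + am) / 2) :
    Continuous (fun z : ℝ => Wq ap am b (u - z)) := by
  rw [continuous_iff_continuousAt]
  intro z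
  have := (Wq_differentiableAt hap ham (β := fun _ : ℂ => b) (ω := fun w : ℂ => u - w)
    (e := (z : ℂ)) (by fun_prop) (by fun_prop) hb (by simpa using h)).continuousAt
  exact ContinuousAt.comp (f := fun z : ℝ => (z : ℂ)) this Complex.continuous_ofReal.continuousAt

lemma H_differentiableAt {ap am : ℝ} (hap : 0 < ap) (ham : 0 < am) (c : ℝ) {p0 : ℂ × ℂ}
    (hb : 0 < p0.1.re) (h : |p0.2.im| + p0.1.re / 2 < (ap + am) / 2) :
    DifferentiableAt ℂ (fun p => ∫ z : ℝ, Hker ap am c p z) p0 := by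
  set η := (ap + am) / 2 - |p0.2.im| - p0.1.re / 2 with hη
  have hη0 : 0 < η := by rw [hη]; linarith
  set r := min (p0.1.re / 2) (η / 3) with hr
  have hr0 : 0 < r := by rw [hr]; apply lt_min <;> linarith
  have hr1 : r ≤ p0.1.re / 2 := min_le_left _ _
  have hr2 : r ≤ η / 3 := min_le_right _ _
  obtain ⟨κ, hκ, hW⟩ := Wq_bound hap ham
  obtain ⟨M, hM⟩ := hW ((ap + am) / 2 - η / 2) (|p0.1.im| + r) (by linarith)
  have hball : ∀ p ∈ Metric.ball p0 r, p0.1.re / 2 ≤ p.1.re ∧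
      |p.2.im| + p.1.re / 2 ≤ (ap + am) / 2 - η / 2 ∧ |p.1.im| ≤ |p0.1.im| + r := by
    intro p hp
    rw [mem_ball_iff_norm, Prod.norm_def, max_lt_iff] at hp
    obtain ⟨h1, h2⟩ := hp
    have k1 := (Complex.abs_re_le_norm (p - p0).1).trans h1.le
    have k2 := (Complex.abs_im_le_norm (p - p0).1).trans h1.le
    have k3 := (Complex.abs_im_le_norm (p - p0).2).trans h2.le
    simp only [Prod.fst_sub, Prod.snd_sub, Complex.sub_re, Complex.sub_im] at k1 k2 k3
    have k1' := abs_le.1 k1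
    have k2' := abs_sub_abs_le_abs_sub p.1.im p0.1.im
    have k3' := abs_sub_abs_le_abs_sub p.2.im p0.2.im
    refine ⟨by linarith, by linarith, by linarith⟩
  set D := p0.1.re * κ with hD
  have hD0 : 0 < D := mul_pos hb hκ
  refine holo_integral (f := Hker ap am c) hr0
    (B := fun z => Real.exp (M + M) * ((1 + 2 / D ^ 2) * (1 + z ^ 2)⁻¹))
    ((integrable_inv_one_add_sq.const_mul _).const_mul _) ?_ ?_ ?_
  · intro p hp
    obtain ⟨k1, k2, k3⟩ := hball p hp
    apply Continuous.aestronglyMeasurable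
    unfold Hker
    have c1 := Wq_continuous hap ham (b := p.1) (u := p.2) (by linarith) (by linarith)
    have c2 := Wq_continuous hap ham (b := p.1) (u := -p.2) (by linarith)
      (by rw [Complex.neg_im, abs_neg]; linarith)
    have c0 : Continuous (fun z : ℝ => Complex.exp (I * (z : ℂ) * (c : ℂ))) := by fun_prop
    exact c0.mul (c1.mul c2)
  · refine Filter.Eventually.of_forall fun z p hp => DifferentiableAt.differentiableWithinAt ?_
    obtain ⟨k1, k2, k3⟩ := hball p hp
    unfold Hker
    apply DifferentiableAt.const_mul
    apply DifferentiableAt.mul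
    · exact Wq_differentiableAt hap ham (β := fun p : ℂ × ℂ => p.1)
        (ω := fun p : ℂ × ℂ => p.2 - z) (by fun_prop) (by fun_prop) (by linarith)
        (by simp only [Complex.sub_im, Complex.ofReal_im, sub_zero]; linarith)
    · exact Wq_differentiableAt hap ham (β := fun p : ℂ × ℂ => p.1)
        (ω := fun p : ℂ × ℂ => -p.2 - z) (by fun_prop) (by fun_prop) (by linarith)
        (by simp only [Complex.sub_im, Complex.neg_im, abs_neg, Complex.ofReal_im, sub_zero]
            linarith)
  · refine Filter.Eventually.of_forall fun z p hp => ?_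
    obtain ⟨k1, k2, k3⟩ := hball p hp
    unfold Hker
    have b1 := hM p.1 (p.2 - z) (by linarith)
      (by simp only [Complex.sub_im, Complex.ofReal_im, sub_zero]; linarith) k3
    have b2 := hM p.1 (-p.2 - z) (by linarith)
      (by simp only [Complex.sub_im, Complex.neg_im, abs_neg, Complex.ofReal_im, sub_zero]
          linarith) k3
    have b0 : ‖Complex.exp (I * (z : ℂ) * (c : ℂ))‖ = 1 := by
      rw [Complex.norm_exp]; simp
    rw [norm_mul, b0, one_mul, norm_mul]
    refine (mul_le_mul b1 b2 (norm_nonneg _) (Real.exp_pos _).le).trans ?_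
    have b3 := exp_neg_le hD0 (abs_nonneg z)
    rw [sq_abs] at b3
    refine le_trans ?_ (mul_le_mul_of_nonneg_left b3 (Real.exp_pos _).le)
    rw [← Real.exp_add, ← Real.exp_add]
    apply Real.exp_le_exp.2
    have e1 : (p.2 - (z : ℂ)).re = p.2.re - z := by simp
    have e2 : (-p.2 - (z : ℂ)).re = -p.2.re - z := by simp
    rw [e1, e2]
    have b4 : 2 * |z| ≤ |p.2.re - z| + |-p.2.re - z| := by
      have := abs_add_le (p.2.re - z) (-p.2.re - z)
      have e : p.2.re - z + (-p.2.re - z) = -(2 * z) := by ring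
      rwa [e, abs_neg, abs_mul, abs_two] at this
    have b5 : p0.1.re / 2 * (2 * |z|) ≤ p.1.re * (|p.2.re - z| + |-p.2.re - z|) :=
      mul_le_mul k1 b4 (by positivity) (by linarith)
    have b6 := mul_le_mul_of_nonneg_left b5 hκ.le
    rw [hD]
    linarith

lemma strip_zero {c : ℝ} {φ : ℂ → ℂ} (hφ : ∀ z : ℂ, |z.im| < c → DifferentiableAt ℂ φ z)
    (h0 : ∀ x : ℝ, φ x = 0) {z : ℂ} (hz : |z.im| < c) : φ z = 0 := by
  have hset : {z : ℂ | |z.im| < c} = {z : ℂ | -c < z.im} ∩ {z : ℂ | z.im < c} := by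
    ext z; simp [abs_lt]
  have hopen : IsOpen {z : ℂ | |z.im| < c} :=
    isOpen_lt (by fun_prop) continuous_const
  have hconv : Convex ℝ {z : ℂ | |z.im| < c} := by
    rw [hset]; exact (convex_halfSpace_im_gt _).inter (convex_halfSpace_im_lt _)
  have han : AnalyticOnNhd ℂ φ {z : ℂ | |z.im| < c} :=
    DifferentiableOn.analyticOnNhd (fun z hz => (hφ z hz).differentiableWithinAt) hopen
  have hc : 0 < c := lt_of_le_of_lt (abs_nonneg _) hz
  have ht : Filter.Tendsto (fun x : ℝ => (x : ℂ)) (nhdsWithin 0 {0}ᶜ) (nhdsWithin 0 {0}ᶜ) := by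
    refine tendsto_nhdsWithin_iff.2 ⟨?_, ?_⟩
    · exact (Complex.continuous_ofReal.tendsto' 0 0 (by simp)).mono_left nhdsWithin_le_nhds
    · filter_upwards [self_mem_nhdsWithin] with x hx
      simpa using hx
  have hf : ∃ᶠ w in nhdsWithin (0 : ℂ) {0}ᶜ, φ w = 0 :=
    ht.frequently (Filter.Eventually.frequently (Filter.Eventually.of_forall h0))
  exact han.eqOn_zero_of_preconnected_of_frequently_eq_zero hconv.isPreconnected
    (z₀ := 0) (by simpa using hc) hf hz

lemma D2_open (ap am : ℝ) : IsOpen (D2 ap am) := by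
  have c1 : Continuous (fun p : ℂ × (Fin 2 → ℂ) => p.1.re) := by fun_prop
  have c2 : Continuous (fun p : ℂ × (Fin 2 → ℂ) => |(p.2 0 - p.2 1).im|) := by fun_prop
  exact ((isOpen_lt continuous_const c1).inter (isOpen_lt c1 continuous_const)).inter
    (isOpen_lt c2 (continuous_const.sub c1))

lemma D2_unique {ap am : ℝ} {D : ℂ × (Fin 2 → ℂ) → ℂ} (hD : DifferentiableOn ℂ D (D2 ap am))
    (h0 : ∀ b : ℂ, 0 < b.re → b.re < ap + am → ∀ x : Fin 2 → ℝ, D (b, fun i => (x i : ℂ)) = 0)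
    {p : ℂ × (Fin 2 → ℂ)} (hp : p ∈ D2 ap am) : D p = 0 := by
  obtain ⟨b, x⟩ := p
  obtain ⟨⟨hb1, hb2⟩, hx⟩ := hp
  simp only at hb1 hb2 hx
  have hDa : ∀ q ∈ D2 ap am, DifferentiableAt ℂ D q := fun q hq =>
    hD.differentiableAt ((D2_open ap am).mem_nhds hq)
  have hmem : ∀ m u : ℂ, 2 * |u.im| < ap + am - b.re → (b, ![m + u, m - u]) ∈ D2 ap am := by
    intro m u hu
    refine ⟨⟨hb1, hb2⟩, ?_⟩
    simp only [Matrix.cons_val_zero, Matrix.cons_val_one]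
    have : (m + u - (m - u)).im = 2 * u.im := by simp; ring
    rw [this, abs_mul, abs_two]
    exact hu
  have step1 : ∀ (u : ℝ) (m : ℂ), D (b, ![m + u, m - u]) = 0 := by
    intro u m
    refine strip_zero (c := |m.im| + 1) (φ := fun m : ℂ => D (b, ![m + u, m - u])) ?_ ?_ (by linarith)
    · intro m _
      refine DifferentiableAt.comp (g := D) (f := fun m : ℂ => (b, ![m + (u : ℂ), m - u])) m
        (hDa _ (hmem m u (by simpa using hb2))) ?_
      refine DifferentiableAt.prodMk (by fun_prop) (differentiableAt_pi.2 fun i => ?_)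
      fin_cases i <;> simp
    · intro m
      convert h0 b hb1 hb2 ![m + u, m - u] using 3
      funext i
      fin_cases i <;> simp
  have step2 : ∀ (m u : ℂ), 2 * |u.im| < ap + am - b.re → D (b, ![m + u, m - u]) = 0 := by
    intro m u hu
    refine strip_zero (c := (ap + am - b.re) / 2) (φ := fun u : ℂ => D (b, ![m + u, m - u])) ?_ ?_
      (by linarith)
    · intro u hu
      refine DifferentiableAt.comp (g := D) (f := fun u : ℂ => (b, ![m + u, m - u])) u
        (hDa _ (hmem m u (by linarith))) ?_
      refine DifferentiableAt.prodMk (by fun_prop) (differentiableAt_pi.2 fun i => ?_)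
      fin_cases i
      · simpa using (differentiableAt_id (𝕜 := ℂ) (x := u)).const_add m
      · simpa using (differentiableAt_id (𝕜 := ℂ) (x := u)).const_sub m
    · intro u
      exact step1 u m
  have := step2 ((x 0 + x 1) / 2) ((x 0 - x 1) / 2) (by
    have e : ((x 0 - x 1) / 2).im = (x 0 - x 1).im / 2 := by
      simp
    rw [e, abs_div, abs_two]
    linarith)
  convert this using 3
  funext i
  fin_cases i
  · simp; ring
  · simp; ring

lemma F_diff {ap am : ℝ} (hap : 0 < ap) (ham : 0 < am) (c d : ℂ) (e : ℝ) :
    DifferentiableOn ℂ (fun p : ℂ × (Fin 2 → ℂ) => Complex.exp (c * (p.2 0 + p.2 1)) *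
    (Complex.exp (I * ((p.2 0 + p.2 1) / 2) * d) *
      ∫ z : ℝ, Hker ap am e (p.1, (p.2 0 - p.2 1) / 2) z)) (D2 ap am) := by
  rintro ⟨b, x⟩ ⟨⟨hb1, hb2⟩, hx⟩
  simp only at hb1 hb2 hx
  apply DifferentiableAt.differentiableWithinAt
  have h0 : DifferentiableAt ℂ (fun p : ℂ × (Fin 2 → ℂ) => p.2 0) (b, x) := by fun_prop
  have h1 : DifferentiableAt ℂ (fun p : ℂ × (Fin 2 → ℂ) => p.2 1) (b, x) := by fun_prop
  refine DifferentiableAt.mul (by fun_prop) (DifferentiableAt.mul (by fun_prop) ?_)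
  refine DifferentiableAt.comp (g := fun q : ℂ × ℂ => ∫ z : ℝ, Hker ap am e q z)
    (f := fun p : ℂ × (Fin 2 → ℂ) => (p.1, (p.2 0 - p.2 1) / 2)) (b, x) ?_ (by fun_prop)
  refine H_differentiableAt hap ham e hb1 ?_
  have e : ((x 0 - x 1) / 2).im = (x 0 - x 1).im / 2 := by
    simp
  simp only
  rw [e, abs_div, abs_two]
  linarith

lemma F_eq (ap am : ℝ) (y : Fin 2 → ℝ) (b : ℂ) (x : Fin 2 → ℝ) :
    Complex.exp (I * (alphaPar ap am : ℂ) * (y 1 : ℂ) * ((x 0 : ℂ) + (x 1 : ℂ))) *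
    (Complex.exp (I * (((x 0 : ℂ) + (x 1 : ℂ)) / 2) * ((alphaPar ap am * (y 0 - y 1) : ℝ) : ℂ)) *
      ∫ z : ℝ, Hker ap am (alphaPar ap am * (y 0 - y 1)) (b, ((x 0 : ℂ) - (x 1 : ℂ)) / 2) z) =
    J2 ap am b x y := by
  unfold J2
  congr 1
  symm
  rw [← integral_add_right_eq_self _ ((x 0 + x 1) / 2), ← integral_const_mul]
  symm
  congr 1
  funext z
  rw [Fin.prod_univ_two]
  unfold Hker Wq
  simp only
  rw [← mul_assoc, ← Complex.exp_add]
  congr 1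
  · congr 1; push_cast; ring
  · congr 3
    all_goals (push_cast; ring_nf)

/-- Prop. 4.1: for fixed real `y`, `J₂(b;x,y)` has a unique holomorphic
extension to the domain `D₂`. -/
theorem statement11 (ap am : ℝ) (hap : 0 < ap) (ham : 0 < am) (y : Fin 2 → ℝ) :
    ∃ F : ℂ × (Fin 2 → ℂ) → ℂ,
      (DifferentiableOn ℂ F (D2 ap am) ∧
        ∀ b : ℂ, 0 < b.re → b.re < ap + am → ∀ x : Fin 2 → ℝ,
          F (b, fun i => (x i : ℂ)) = J2 ap am b x y) ∧
      ∀ F' : ℂ × (Fin 2 → ℂ) → ℂ,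
        DifferentiableOn ℂ F' (D2 ap am) →
        (∀ b : ℂ, 0 < b.re → b.re < ap + am → ∀ x : Fin 2 → ℝ,
          F' (b, fun i => (x i : ℂ)) = J2 ap am b x y) →
        Set.EqOn F' F (D2 ap am) := by
  set c : ℝ := alphaPar ap am * (y 0 - y 1) with hc
  refine ⟨fun p => Complex.exp (I * (alphaPar ap am : ℂ) * (y 1 : ℂ) * (p.2 0 + p.2 1)) *
    (Complex.exp (I * ((p.2 0 + p.2 1) / 2) * (c : ℂ)) *
      ∫ z : ℝ, Hker ap am c (p.1, (p.2 0 - p.2 1) / 2) z), ⟨?_, ?_⟩, ?_⟩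
  · exact F_diff hap ham _ _ c
  · intro b _ _ x
    exact F_eq ap am y b x
  · intro F' hF' hJ p hp
    refine sub_eq_zero.1 (D2_unique (hF'.sub (F_diff hap ham
      (I * (alphaPar ap am : ℂ) * (y 1 : ℂ)) (c : ℂ) c)) ?_ hp)
    intro b h1 h2 x
    refine sub_eq_zero.2 ((hJ b h1 h2 x).trans (F_eq ap am y b x).symm)
end
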